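/- arXiv:1812.05261 — 5 statements merged into one kernel-verified Lean document; each statement's English description precedes it below -/
import Mathlib

section
/- Let m, n be positive integers. A nonempty subset I of the product poset Fin m × Fin n is an interval (convex and connected) if and only if there exist integers 1 ≤ s ≤ t ≤ m and a staircase, i.e., integers b_i, d_i for s ≤ i ≤ t with 1 ≤ b_i ≤ d_i ≤ n and b_{i+1} ≤ b_i ≤ d_{i+1} ≤ d_i for all s ≤ i ≤ t−1, such that I = {(i, j) | s ≤ i ≤ t, b_i ≤ j ≤ d_i}. Moreover, this staircase is uniquely determined by I, so the set of intervals of Fin m × Fin n is in bijection with the set of staircases. -/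
open Classical

variable {P : Type} [PartialOrder P]

/-- Convexity of a subset of a poset. -/
def IsConvexSet (I : Set P) : Prop :=
  ∀ ⦃a b c : P⦄, a ∈ I → c ∈ I → a ≤ b → b ≤ c → b ∈ I

/-- Connectedness of a subset of a poset: any two elements are joined by a
sequence inside the subset in which consecutive elements are comparable. -/
def IsConnectedSet (I : Set P) : Prop :=
  ∀ a ∈ I, ∀ b ∈ I,
    Relation.ReflTransGen (fun u v : P => u ∈ I ∧ v ∈ I ∧ (u ≤ v ∨ v ≤ u)) a b

/-- An interval of a poset: a nonempty, convex and connected subset. -/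
def IsIntervalSet (I : Set P) : Prop :=
  I.Nonempty ∧ IsConvexSet I ∧ IsConnectedSet I

/-- The subset of the grid determined by a family of slices: row `i` carries
the slice `[b_i, d_i]` when `c i = some (b_i, d_i)`, and is empty when
`c i = none`. -/
def staircaseSet {m n : ℕ} (c : Fin m → Option (Fin n × Fin n)) :
    Set (Fin m × Fin n) :=
  {p | ∃ bd : Fin n × Fin n, c p.1 = some bd ∧ bd.1 ≤ p.2 ∧ p.2 ≤ bd.2}

/-- A staircase: a nonempty contiguous range of rows, each carrying a slice
`[b_i, d_i]` with `b_i ≤ d_i`, such that consecutive slices satisfy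
`b_{i+1} ≤ b_i ≤ d_{i+1} ≤ d_i`. -/
def IsStaircase {m n : ℕ} (c : Fin m → Option (Fin n × Fin n)) : Prop :=
  (∃ i, c i ≠ none) ∧
  (∀ i₁ i₂ i₃ : Fin m, i₁ ≤ i₂ → i₂ ≤ i₃ → c i₁ ≠ none → c i₃ ≠ none →
    c i₂ ≠ none) ∧
  (∀ (i : Fin m) (bd : Fin n × Fin n), c i = some bd → bd.1 ≤ bd.2) ∧
  (∀ (i i' : Fin m) (bd bd' : Fin n × Fin n), (i' : ℕ) = (i : ℕ) + 1 →
    c i = some bd → c i' = some bd' →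
      bd'.1 ≤ bd.1 ∧ bd.1 ≤ bd'.2 ∧ bd'.2 ≤ bd.2)

theorem crossing_aux {m n : ℕ} {I : Set (Fin m × Fin n)} (k : Fin m) {a b : Fin m × Fin n}
    (h : Relation.ReflTransGen (fun u v : Fin m × Fin n => u ∈ I ∧ v ∈ I ∧ (u ≤ v ∨ v ≤ u)) a b)
    (ha : a.1 ≤ k) : k < b.1 → ∃ u ∈ I, ∃ v ∈ I, u ≤ v ∧ u.1 ≤ k ∧ k < v.1 := by
  induction h with
  | refl => intro hb; exact absurd hb (not_lt.mpr ha)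
  | tail _ hst ih =>
    rename_i u v _
    intro hb
    by_cases hu : k < u.1
    · exact ih hu
    · obtain ⟨h1, h2, h3⟩ := hst
      rcases h3 with h3 | h3
      · exact ⟨u, h1, v, h2, h3, not_lt.mp hu, hb⟩
      · exact absurd (lt_of_lt_of_le hb h3.1) hu

theorem row_slice {m n : ℕ} {I : Set (Fin m × Fin n)} (hc : IsConvexSet I) (i : Fin m) :
    ∃ o : Option (Fin n × Fin n), (o = none ∧ ∀ j, (i, j) ∉ I) ∨
      (∃ bd : Fin n × Fin n, o = some bd ∧ bd.1 ≤ bd.2 ∧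
        ∀ j, (i, j) ∈ I ↔ bd.1 ≤ j ∧ j ≤ bd.2) := by
  by_cases h : ∃ j, (i, j) ∈ I
  · obtain ⟨j0, hj0⟩ := h
    obtain ⟨b, hb, hb'⟩ := Set.exists_min_image {j | (i, j) ∈ I} id (Set.toFinite _) ⟨j0, hj0⟩
    obtain ⟨d, hd, hd'⟩ := Set.exists_max_image {j | (i, j) ∈ I} id (Set.toFinite _) ⟨j0, hj0⟩
    refine ⟨some (b, d), Or.inr ⟨(b, d), rfl, hb' d hd, fun j => ⟨fun hj => ⟨hb' j hj, hd' j hj⟩, ?_⟩⟩⟩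
    rintro ⟨h1, h2⟩
    exact hc hb hd ⟨le_refl _, h1⟩ ⟨le_refl _, h2⟩
  · exact ⟨none, Or.inl ⟨rfl, fun j hj => h ⟨j, hj⟩⟩⟩

theorem stair_mono {m n : ℕ} {c : Fin m → Option (Fin n × Fin n)} (hs : IsStaircase c) (k : ℕ) :
    ∀ (i i' : Fin m) (bd bd' : Fin n × Fin n), (i' : ℕ) = (i : ℕ) + k →
    c i = some bd → c i' = some bd' →
      bd'.1 ≤ bd.1 ∧ bd'.2 ≤ bd.2 ∧
      Relation.ReflTransGen (fun u v : Fin m × Fin n => u ∈ staircaseSet c ∧ v ∈ staircaseSet c ∧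
        (u ≤ v ∨ v ≤ u)) (i, bd.1) (i', bd'.1) := by
  obtain ⟨_, h2, h3, h4⟩ := hs
  induction k with
  | zero =>
    intro i i' bd bd' h e e'
    obtain rfl : i' = i := Fin.ext (by omega)
    rw [e] at e'
    cases e'
    exact ⟨le_refl _, le_refl _, .refl⟩
  | succ k ih =>
    intro i i' bd bd' h e e'
    let l : Fin m := ⟨i + k, by omega⟩
    have hl : c l ≠ none := h2 i l i' (Fin.le_def.mpr (by simp [l]))
      (Fin.le_def.mpr (by simp [l]; omega)) (by simp [e]) (by simp [e'])
    obtain ⟨x, hx⟩ := Option.ne_none_iff_exists'.mp hl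
    obtain ⟨a1, a2, a3⟩ := ih i l bd x rfl e hx
    obtain ⟨b1, b2, b3⟩ := h4 l i' x bd' (by simp [l]; omega) hx e'
    have hli : l ≤ i' := Fin.le_def.mpr (by simp [l]; omega)
    have m1 : (l, x.1) ∈ staircaseSet c := ⟨x, hx, le_refl _, h3 _ _ hx⟩
    have m2 : (i', x.1) ∈ staircaseSet c := ⟨bd', e', b1, b2⟩
    have m3 : (i', bd'.1) ∈ staircaseSet c := ⟨bd', e', le_refl _, h3 _ _ e'⟩
    exact ⟨b1.trans a1, b3.trans a2, (a3.tail ⟨m1, m2, Or.inl ⟨hli, le_refl _⟩⟩).tail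
      ⟨m2, m3, Or.inr ⟨le_refl _, b1⟩⟩⟩

theorem stair_interval {m n : ℕ} {c : Fin m → Option (Fin n × Fin n)} (hs : IsStaircase c) :
    IsIntervalSet (staircaseSet c) := by
  have hmono := stair_mono hs
  obtain ⟨h1, h2, h3, h4⟩ := hs
  refine ⟨?_, ?_, ?_⟩
  · obtain ⟨i, hi⟩ := h1
    obtain ⟨x, hx⟩ := Option.ne_none_iff_exists'.mp hi
    exact ⟨(i, x.1), x, hx, le_refl _, h3 _ _ hx⟩
  · rintro p q r ⟨x, hx, hx1, hx2⟩ ⟨z, hz, hz1, hz2⟩ hpq hqr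
    have hq : c q.1 ≠ none := h2 p.1 q.1 r.1 hpq.1 hqr.1 (by simp [hx]) (by simp [hz])
    obtain ⟨y, hy⟩ := Option.ne_none_iff_exists'.mp hq
    have l1 : (p.1 : ℕ) ≤ q.1 := hpq.1
    have l2 : (q.1 : ℕ) ≤ r.1 := hqr.1
    have e1 := hmono (q.1 - p.1) p.1 q.1 x y (by omega) hx hy
    have e2 := hmono (r.1 - q.1) q.1 r.1 y z (by omega) hy hz
    exact ⟨y, hy, e1.1.trans (hx1.trans hpq.2), hqr.2.trans (hz2.trans e2.2.1)⟩
  · have hsymm : ∀ a b : Fin m × Fin n, Relation.ReflTransGen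
        (fun u v : Fin m × Fin n => u ∈ staircaseSet c ∧ v ∈ staircaseSet c ∧
          (u ≤ v ∨ v ≤ u)) a b → Relation.ReflTransGen
        (fun u v : Fin m × Fin n => u ∈ staircaseSet c ∧ v ∈ staircaseSet c ∧
          (u ≤ v ∨ v ≤ u)) b a := by
      intro a b h
      induction h with
      | refl => exact .refl
      | tail _ hst ih => exact .head ⟨hst.2.1, hst.1, hst.2.2.symm⟩ ih
    rintro p ⟨x, hx, hx1, hx2⟩ q ⟨y, hy, hy1, hy2⟩
    have s1 : Relation.ReflTransGen
        (fun u v : Fin m × Fin n => u ∈ staircaseSet c ∧ v ∈ staircaseSet c ∧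
          (u ≤ v ∨ v ≤ u)) p (p.1, x.1) :=
      .single ⟨⟨x, hx, hx1, hx2⟩, ⟨x, hx, le_refl _, h3 _ _ hx⟩, Or.inr ⟨le_refl _, hx1⟩⟩
    have s3 : Relation.ReflTransGen
        (fun u v : Fin m × Fin n => u ∈ staircaseSet c ∧ v ∈ staircaseSet c ∧
          (u ≤ v ∨ v ≤ u)) (q.1, y.1) q :=
      .single ⟨⟨y, hy, le_refl _, h3 _ _ hy⟩, ⟨y, hy, hy1, hy2⟩, Or.inl ⟨le_refl _, hy1⟩⟩
    refine (s1.trans ?_).trans s3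
    rcases le_total (p.1 : ℕ) q.1 with h | h
    · exact (hmono (q.1 - p.1) p.1 q.1 x y (by omega) hx hy).2.2
    · exact hsymm _ _ (hmono (p.1 - q.1) q.1 p.1 y x (by omega) hy hx).2.2

theorem stair_unique {m n : ℕ} {c c' : Fin m → Option (Fin n × Fin n)} (hs : IsStaircase c)
    (hs' : IsStaircase c') (h : staircaseSet c = staircaseSet c') : c = c' := by
  obtain ⟨_, _, h3, _⟩ := hs
  obtain ⟨_, _, h3', _⟩ := hs'
  have key : ∀ i j, (∃ bd : Fin n × Fin n, c i = some bd ∧ bd.1 ≤ j ∧ j ≤ bd.2) ↔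
      (∃ bd : Fin n × Fin n, c' i = some bd ∧ bd.1 ≤ j ∧ j ≤ bd.2) :=
    fun i j => Set.ext_iff.mp h (i, j)
  funext i
  cases e : c i with
  | none =>
    cases e' : c' i with
    | none => rfl
    | some y =>
      obtain ⟨bd, hbd, _⟩ := (key i y.1).mpr ⟨y, e', le_refl _, h3' _ _ e'⟩
      simp [e] at hbd
  | some x =>
    obtain ⟨y, e', p1, p2⟩ := (key i x.1).mp ⟨x, e, le_refl _, h3 _ _ e⟩
    obtain ⟨y2, e2, p3, p4⟩ := (key i x.2).mp ⟨x, e, h3 _ _ e, le_refl _⟩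
    obtain ⟨x1, f1, q1, q2⟩ := (key i y.1).mpr ⟨y, e', le_refl _, h3' _ _ e'⟩
    obtain ⟨x2, f2, q3, q4⟩ := (key i y.2).mpr ⟨y, e', h3' _ _ e', le_refl _⟩
    rw [e] at f1 f2
    rw [e'] at e2
    cases f1; cases f2; cases e2
    rw [e']
    exact congrArg some (Prod.ext (le_antisymm q1 p1) (le_antisymm p4 q4))

theorem interval_stair {m n : ℕ} {I : Set (Fin m × Fin n)} (hI : IsIntervalSet I) :
    ∃ c : Fin m → Option (Fin n × Fin n), IsStaircase c ∧ I = staircaseSet c := by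
  obtain ⟨hne, hc, hconn⟩ := hI
  choose c hcs using row_slice hc
  have hsome : ∀ i bd, c i = some bd → bd.1 ≤ bd.2 ∧ ∀ j, (i, j) ∈ I ↔ bd.1 ≤ j ∧ j ≤ bd.2 := by
    intro i bd e
    rcases hcs i with ⟨h, _⟩ | ⟨x, hx, h⟩
    · simp [e] at h
    · rw [e] at hx; cases hx; exact h
  have hmem : ∀ i j, (i, j) ∈ I → c i ≠ none := by
    intro i j hij
    rcases hcs i with ⟨_, h⟩ | ⟨x, hx, h⟩
    · exact absurd hij (h j)
    · simp [hx]
  have hpt : ∀ i, c i ≠ none → ∃ j, (i, j) ∈ I := by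
    intro i hi
    obtain ⟨x, hx⟩ := Option.ne_none_iff_exists'.mp hi
    exact ⟨x.1, ((hsome i x hx).2 _).mpr ⟨le_refl _, (hsome i x hx).1⟩⟩
  refine ⟨c, ⟨?_, ?_, fun i bd e => (hsome i bd e).1, ?_⟩, ?_⟩
  · obtain ⟨⟨i, j⟩, h⟩ := hne
    exact ⟨i, hmem i j h⟩
  · intro i1 i2 i3 h12 h23 c1 c3
    rcases h23.eq_or_lt with rfl | h23
    · exact c3
    obtain ⟨j1, hj1⟩ := hpt i1 c1
    obtain ⟨j3, hj3⟩ := hpt i3 c3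
    obtain ⟨u, hu, v, hv, huv, hu2, hv2⟩ := crossing_aux i2 (hconn _ hj1 _ hj3) h12 h23
    exact hmem i2 u.2 (hc hu hv ⟨hu2, le_refl _⟩ ⟨hv2.le, huv.2⟩)
  · intro i i' x y hii ex ey
    have hlt : i < i' := Fin.lt_def.mpr (by omega)
    obtain ⟨hx, hx'⟩ := hsome i x ex
    obtain ⟨hy, hy'⟩ := hsome i' y ey
    have mx : (i, x.1) ∈ I := (hx' _).mpr ⟨le_refl _, hx⟩
    have my : (i', y.2) ∈ I := (hy' _).mpr ⟨hy, le_refl _⟩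
    obtain ⟨u, hu, v, hv, huv, hu2, hv2⟩ := crossing_aux i (hconn _ mx _ my) (le_refl _) hlt
    have hv3 : i' ≤ v.1 := Fin.le_def.mpr (by have := Fin.lt_def.mp hv2; omega)
    have w1 : (i, u.2) ∈ I := hc hu hv ⟨hu2, le_refl _⟩ ⟨hv2.le, huv.2⟩
    have w2 : (i', u.2) ∈ I := hc hu hv ⟨hu2.trans hlt.le, le_refl _⟩ ⟨hv3, huv.2⟩
    have z1 : (i', x.1) ∈ I := hc mx w2 ⟨hlt.le, le_refl _⟩ ⟨le_refl _, ((hx' _).mp w1).1⟩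
    have z2 : (i, y.2) ∈ I := hc w1 my ⟨le_refl _, ((hy' _).mp w2).2⟩ ⟨hlt.le, le_refl _⟩
    exact ⟨((hy' _).mp z1).1, ((hy' _).mp z1).2, ((hx' _).mp z2).2⟩
  · ext ⟨i, j⟩
    constructor
    · intro h
      obtain ⟨x, hx⟩ := Option.ne_none_iff_exists'.mp (hmem i j h)
      exact ⟨x, hx, ((hsome i x hx).2 j).mp h⟩
    · rintro ⟨x, hx, h⟩
      exact ((hsome i x hx).2 j).mpr h

/-- A subset of the product poset `Fin m × Fin n` is an interval
if and only if it is the set determined by a (unique) staircase. -/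
theorem interval_iff_unique_staircase (m n : ℕ) (hm : 0 < m) (hn : 0 < n)
    (I : Set (Fin m × Fin n)) :
    IsIntervalSet I ↔
      ∃! c : Fin m → Option (Fin n × Fin n), IsStaircase c ∧ I = staircaseSet c := by
  constructor
  · intro hI
    obtain ⟨c, hc, rfl⟩ := interval_stair hI
    exact ⟨c, ⟨hc, rfl⟩, fun c' h => stair_unique h.1 hc h.2.symm⟩
  · rintro ⟨c, ⟨hc, rfl⟩, _⟩
    exact stair_interval hc
end

section
/- Let h, w be positive integers. The number of intervals I of the product poset Fin h × Fin w such that both coordinate projections of I are surjective (every row index in Fin h and every column index in Fin w occurs in I) equals the Narayana number N(h+w−1, h) = (1/(h+w−1)) · C(h+w−1, h−1) · C(h+w−1, w−1). -/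
open Classical

variable {P : Type} [PartialOrder P]

def PFam : (k : ℕ) → ℕ × ℕ → Finset (Fin (k + 1) → ℕ × ℕ)
  | 0, p => if p.1 = 0 then {fun _ => p} else ∅
  | k + 1, p => ((Finset.range (p.1 + 1) ×ˢ Finset.Icc p.1 p.2).biUnion (PFam k)).image
      (fun g => (Fin.cons p g : Fin (k + 2) → ℕ × ℕ))

def Step (p q : ℕ × ℕ) : Prop := q.1 ≤ p.1 ∧ p.1 ≤ q.2 ∧ q.2 ≤ p.2

theorem mem_PFam (k : ℕ) : ∀ (p : ℕ × ℕ) (f : Fin (k + 1) → ℕ × ℕ),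
    f ∈ PFam k p ↔ f 0 = p ∧ (f (Fin.last k)).1 = 0 ∧
      ∀ i : Fin k, Step (f i.castSucc) (f i.succ) := by
  induction k with
  | zero =>
    intro p f
    unfold PFam
    constructor
    · intro h
      split_ifs at h with hp
      · rw [Finset.mem_singleton] at h
        subst h
        exact ⟨rfl, hp, fun i => i.elim0⟩
      · simp at h
    · rintro ⟨h0, h1, -⟩
      have : p.1 = 0 := by rw [← h0]; exact h1
      rw [if_pos this, Finset.mem_singleton]
      funext i
      rw [← h0, Fin.fin_one_eq_zero i]
  | succ k ih =>
    intro p f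
    unfold PFam
    simp only [Finset.mem_image, Finset.mem_biUnion, Finset.mem_product, Finset.mem_range,
      Finset.mem_Icc]
    constructor
    · rintro ⟨g, ⟨q, hq, hg⟩, rfl⟩
      obtain ⟨h0, h1, h2⟩ := (ih q g).1 hg
      refine ⟨rfl, ?_, ?_⟩
      · rw [← Fin.succ_last, Fin.cons_succ]; exact h1
      · intro i
        refine Fin.cases ?_ (fun i => ?_) i
        · rw [Fin.cons_succ, h0]
          simp only [Fin.castSucc_zero, Fin.cons_zero]
          exact ⟨by omega, by omega, by omega⟩
        · rw [Fin.cons_succ, ← Fin.succ_castSucc, Fin.cons_succ]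
          exact h2 i
    · rintro ⟨h0, h1, h2⟩
      refine ⟨Fin.tail f, ⟨f 1, ?_, (ih _ _).2 ⟨rfl, ?_, ?_⟩⟩, ?_⟩
      · have := h2 0
        simp only [Fin.castSucc_zero, h0, Fin.succ_zero_eq_one] at this
        obtain ⟨a, b, c⟩ := this
        omega
      · rw [Fin.tail, Fin.succ_last]; exact h1
      · intro i
        have := h2 i.succ
        rw [← Fin.succ_castSucc] at this
        exact this
      · rw [← h0]; exact Fin.cons_self_tail f

theorem disj_PFam (k : ℕ) (s : Set (ℕ × ℕ)) : s.PairwiseDisjoint (PFam k) := by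
  intro p _ q _ hpq
  rw [Function.onFun, Finset.disjoint_left]
  intro f hf hg
  exact hpq (((mem_PFam k p f).1 hf).1.symm.trans ((mem_PFam k q f).1 hg).1)

theorem card_PFam_succ (k : ℕ) (p : ℕ × ℕ) : (PFam (k + 1) p).card =
    ∑ a ∈ Finset.range (p.1 + 1), ∑ b ∈ Finset.Icc p.1 p.2, (PFam k (a, b)).card := by
  conv_lhs => unfold PFam
  rw [Finset.card_image_of_injective _ (Fin.cons_right_injective (α := fun _ => ℕ × ℕ) p),
    Finset.card_biUnion (fun p hp q hq => disj_PFam k Set.univ trivial trivial),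
    Finset.sum_product]

theorem sum_choose_r (c k a : ℕ) : ∑ x ∈ Finset.range (a + 1), ((x + c + k).choose k : ℤ)
    + ((c + k).choose (k + 1) : ℤ) = ((a + 1 + c + k).choose (k + 1) : ℤ) := by
  induction a with
  | zero =>
    have : (0 + 1 + c + k) = (c + k) + 1 := by ring
    rw [this, Nat.choose_succ_succ]; simp
  | succ a ih =>
    rw [Finset.sum_range_succ]
    have : (a + 1 + 1 + c + k) = (a + 1 + c + k) + 1 := by ring
    rw [this, Nat.choose_succ_succ]
    push_cast
    linarith

theorem sum_choose_l (k a : ℕ) : ∑ x ∈ Finset.range (a + 1), ((x + k).choose (k + 1) : ℤ)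
     = ((a + 1 + k).choose (k + 2) : ℤ) := by
  induction a with
  | zero => simp; rw [Nat.choose_eq_zero_of_lt (by omega)]; rfl
  | succ a ih =>
    rw [Finset.sum_range_succ, ih]
    have : (a + 1 + 1 + k) = (a + 1 + k) + 1 := by ring
    rw [this, Nat.choose_succ_succ (a+1+k) (k+1)]
    push_cast
    ring

theorem sum_Icc_tel (f g : ℕ → ℤ) (hg : ∀ x, g (x + 1) = g x + f x) (a b : ℕ) (hab : a ≤ b + 1) :
    ∑ x ∈ Finset.Icc a b, f x = g (b + 1) - g a := by
  have : Finset.Icc a b = Finset.Ico a (b + 1) := by ext; simp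
  rw [this, ← Finset.sum_Ico_sub g hab]
  exact Finset.sum_congr rfl (fun x _ => by rw [hg]; ring)

theorem card_PFam (j : ℕ) : ∀ a b : ℕ, a ≤ b → ((PFam (j + 1) (a, b)).card : ℤ) =
    (a + j).choose j * (b + j + 1).choose (j + 1) - (a + j).choose (j + 1) * (b + j + 1).choose j := by
  induction j with
  | zero =>
    intro a b hab
    rw [card_PFam_succ, Finset.sum_range_succ']
    have : ∀ x y, (PFam 0 (x, y)).card = if x = 0 then 1 else 0 := by
      intro x y; unfold PFam; split_ifs <;> simp_all
    simp [this]
    omega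
  | succ j ih =>
    intro a b hab
    rw [card_PFam_succ]
    push_cast
    have e : ∀ x ∈ Finset.range (a + 1), ∀ y ∈ Finset.Icc a b,
        ((PFam (j + 1) (x, y)).card : ℤ) = (x + j).choose j * (y + j + 1).choose (j + 1)
          - (x + j).choose (j + 1) * (y + j + 1).choose j := by
      intro x hx y hy
      simp at hx hy
      exact ih x y (by omega)
    rw [Finset.sum_congr rfl (fun x hx => Finset.sum_congr rfl (e x hx))]
    simp only [Finset.sum_sub_distrib, ← Finset.mul_sum, ← Finset.sum_mul]
    rw [sum_Icc_tel (fun y => ((y + j + 1).choose (j + 1) : ℤ))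
        (fun y => ((y + j + 1).choose (j + 2) : ℤ)) _ a b (by omega),
      sum_Icc_tel (fun y => ((y + j + 1).choose j : ℤ))
        (fun y => ((y + j + 1).choose (j + 1) : ℤ)) _ a b (by omega), sum_choose_l]
    · have := sum_choose_r 0 j a
      simp at this
      rw [this]
      have e1 : b + 1 + j + 1 = b + (j + 1) + 1 := by ring
      have e2 : a + 1 + j = a + (j + 1) := by ring
      have e3 : a + j + 1 = a + (j + 1) := by ring
      rw [e1, e2, e3]
      ring
    · intro x
      have : x + 1 + j + 1 = (x + j + 1) + 1 := by ring
      rw [this, Nat.choose_succ_succ (x + j + 1) j]; push_cast; ring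
    · intro x
      have : x + 1 + j + 1 = (x + j + 1) + 1 := by ring
      rw [this, Nat.choose_succ_succ (x + j + 1) (j + 1)]; push_cast; ring

def Tot (k m : ℕ) : Finset (Fin (k + 1) → ℕ × ℕ) :=
  (Finset.range (m + 1)).biUnion (fun a => PFam k (a, m))

theorem card_Tot' (k m : ℕ) : (Tot k m).card = ∑ a ∈ Finset.range (m + 1), (PFam k (a, m)).card := by
  unfold Tot
  rw [Finset.card_biUnion]
  intro x _ y _ hxy
  exact disj_PFam k Set.univ trivial trivial (fun h => hxy (congrArg Prod.fst h))

theorem card_Tot (k m : ℕ) : (Tot k m).card =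
    Nat.choose (k + 1 + (m + 1) - 1) (k + 1 - 1) * Nat.choose (k + 1 + (m + 1) - 1) (m + 1 - 1)
      / (k + 1 + (m + 1) - 1) := by
  have e0 : k + 1 + (m + 1) - 1 = k + m + 1 := by omega
  rw [e0, Nat.add_sub_cancel, Nat.add_sub_cancel]
  symm
  apply Nat.div_eq_of_eq_mul_left (by omega)
  rcases k with _ | j
  · rw [card_Tot', Finset.sum_range_succ']
    have : ∀ x y, (PFam 0 (x, y)).card = if x = 0 then 1 else 0 := by
      intro x y; unfold PFam; split_ifs <;> simp_all
    simp [this]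
  · have hT : ((Tot (j + 1) m).card : ℤ) = (m + j + 1).choose (j + 1) * (m + j + 1).choose (j + 1)
        - (m + j + 1).choose (j + 2) * (m + j + 1).choose j := by
      rw [card_Tot']
      push_cast
      rw [Finset.sum_congr rfl (fun x hx => card_PFam j x m (by simp at hx; omega))]
      simp only [Finset.sum_sub_distrib, ← Finset.sum_mul]
      have := sum_choose_r 0 j m
      simp at this
      rw [this, sum_choose_l]
      have e2 : m + 1 + j = m + j + 1 := by ring
      rw [e2]
    have es : Nat.choose (j + 1 + m + 1) m = Nat.choose (j + 1 + m + 1) (j + 2) := by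
      rw [← Nat.choose_symm_of_eq_add]; ring
    rw [es]
    have e3 : j + 1 + m + 1 = (m + j + 1) + 1 := by ring
    rw [e3]
    zify
    rw [hT, Nat.choose_succ_succ (m + j + 1) j, Nat.choose_succ_succ (m + j + 1) (j + 1)]
    have r1 := Nat.choose_succ_right_eq (m + j + 1) j
    have r2 := Nat.choose_succ_right_eq (m + j + 1) (j + 1)
    rw [show m + j + 1 - j = m + 1 by omega] at r1
    rw [show m + j + 1 - (j + 1) = m by omega] at r2
    zify at r1 r2
    push_cast
    simp only [add_assoc, one_add_one_eq_two] at r1 r2 ⊢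
    generalize ((m + (j + 1)).choose j : ℤ) = A at *
    generalize ((m + (j + 1)).choose (j + 1) : ℤ) = B at *
    generalize ((m + (j + 1)).choose (j + 2) : ℤ) = D at *
    linear_combination (-B - D) * r1 + (B + A) * r2

def Phi (k m : ℕ) (f : Fin (k + 1) → ℕ × ℕ) : Set (Fin (k + 1) × Fin (m + 1)) :=
  {x | (f x.1).1 ≤ x.2.val ∧ x.2.val ≤ (f x.1).2}

theorem mem_Tot (k m : ℕ) (f : Fin (k + 1) → ℕ × ℕ) : f ∈ Tot k m ↔
    (f 0).1 ≤ m ∧ (f 0).2 = m ∧ (f (Fin.last k)).1 = 0 ∧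
      ∀ i : Fin k, Step (f i.castSucc) (f i.succ) := by
  unfold Tot
  simp only [Finset.mem_biUnion, Finset.mem_range, mem_PFam]
  constructor
  · rintro ⟨a, ha, h0, h⟩
    rw [h0]
    exact ⟨by simp; omega, rfl, h⟩
  · rintro ⟨h0, h1, h⟩
    exact ⟨(f 0).1, by omega, Prod.ext rfl h1, h⟩

section
variable {k m : ℕ} {f : Fin (k + 1) → ℕ × ℕ}

theorem tot_le (hf : f ∈ Tot k m) (i : Fin (k + 1)) : (f i).1 ≤ (f i).2 := by
  obtain ⟨h0, h1, h2, h3⟩ := (mem_Tot k m f).1 hf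
  refine Fin.cases ?_ (fun i => ?_) i
  · omega
  · exact (h3 i).1.trans (h3 i).2.1

theorem tot_anti1 (hf : f ∈ Tot k m) : Antitone (fun i => (f i).1) := by
  obtain ⟨h0, h1, h2, h3⟩ := (mem_Tot k m f).1 hf
  exact Fin.antitone_iff_succ_le.2 (fun i => (h3 i).1)

theorem tot_anti2 (hf : f ∈ Tot k m) : Antitone (fun i => (f i).2) := by
  obtain ⟨h0, h1, h2, h3⟩ := (mem_Tot k m f).1 hf
  exact Fin.antitone_iff_succ_le.2 (fun i => (h3 i).2.2)

theorem tot_bd (hf : f ∈ Tot k m) (i : Fin (k + 1)) : (f i).2 ≤ m := by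
  have := tot_anti2 hf (Fin.zero_le i)
  obtain ⟨h0, h1, h2, h3⟩ := (mem_Tot k m f).1 hf
  simp only at this
  omega

theorem phi_inj_aux {g : Fin (k + 1) → ℕ × ℕ} (hf : f ∈ Tot k m) (hg : g ∈ Tot k m)
    (h : Phi k m f = Phi k m g) (i : Fin (k + 1)) : (g i).1 ≤ (f i).1 ∧ (f i).2 ≤ (g i).2 := by
  have a := tot_le hf i
  have b := tot_bd hf i
  have h1 : ((i, ⟨(f i).1, by omega⟩) : Fin (k + 1) × Fin (m + 1)) ∈ Phi k m g := by
    rw [← h]; exact ⟨le_rfl, a⟩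
  have h2 : ((i, ⟨(f i).2, by omega⟩) : Fin (k + 1) × Fin (m + 1)) ∈ Phi k m g := by
    rw [← h]; exact ⟨a, le_rfl⟩
  exact ⟨h1.1, h2.2⟩

theorem phi_inj : Set.InjOn (Phi k m) (Tot k m : Set (Fin (k + 1) → ℕ × ℕ)) := by
  intro f hf g hg h
  funext i
  have a := phi_inj_aux hf hg h i
  have b := phi_inj_aux hg hf h.symm i
  exact Prod.ext (by omega) (by omega)

theorem phi_conn (hf : f ∈ Tot k m) (i : Fin (k + 1)) : ∀ j : Fin (m + 1), (i, j) ∈ Phi k m f →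
    Relation.ReflTransGen (fun u v : Fin (k + 1) × Fin (m + 1) =>
      u ∈ Phi k m f ∧ v ∈ Phi k m f ∧ (u ≤ v ∨ v ≤ u)) (i, j) (0, Fin.last m) := by
  obtain ⟨h0, h1, h2, h3⟩ := (mem_Tot k m f).1 hf
  induction i using Fin.induction with
  | zero =>
    intro j hj
    refine Relation.ReflTransGen.single ⟨hj, ⟨by simpa using h0, by simp [h1]⟩, Or.inl ?_⟩
    exact ⟨le_rfl, Fin.le_last j⟩
  | succ i ih =>
    intro j hj
    obtain ⟨s1, s2, s3⟩ := h3 i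
    have b := tot_bd hf i.castSucc
    have c := tot_le hf i.castSucc
    let j' : Fin (m + 1) := ⟨(f i.castSucc).1, by omega⟩
    have m1 : (i.castSucc, j') ∈ Phi k m f := ⟨le_rfl, c⟩
    have m2 : (i.succ, j') ∈ Phi k m f := ⟨s1, s2⟩
    refine Relation.ReflTransGen.head (b := (i.succ, j')) ⟨hj, m2, ?_⟩
      (Relation.ReflTransGen.head (b := (i.castSucc, j')) ⟨m2, m1, Or.inr ?_⟩ (ih j' m1))
    · rcases le_total j j' with h | h
      · exact Or.inl ⟨le_rfl, h⟩
      · exact Or.inr ⟨le_rfl, h⟩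
    · exact ⟨Fin.castSucc_le_succ i, le_rfl⟩

theorem phi_good (hf : f ∈ Tot k m) : IsIntervalSet (Phi k m f) ∧
    (∀ i : Fin (k + 1), ∃ j : Fin (m + 1), (i, j) ∈ Phi k m f) ∧
    (∀ j : Fin (m + 1), ∃ i : Fin (k + 1), (i, j) ∈ Phi k m f) := by
  have hc := @phi_conn k m f hf
  obtain ⟨h0, h1, h2, h3⟩ := (mem_Tot k m f).1 hf
  have hrow : ∀ i : Fin (k + 1), ∃ j : Fin (m + 1), (i, j) ∈ Phi k m f := by
    intro i
    have b := tot_bd hf i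
    have c := tot_le hf i
    exact ⟨⟨(f i).1, by omega⟩, le_rfl, c⟩
  refine ⟨⟨⟨(0, (hrow 0).choose), (hrow 0).choose_spec⟩, ?_, ?_⟩, hrow, ?_⟩
  · rintro a b c ha hc hab hbc
    have t1 := tot_anti1 hf hab.1
    have t2 := tot_anti2 hf hbc.1
    have t3 : a.2.val ≤ b.2.val := hab.2
    have t4 : b.2.val ≤ c.2.val := hbc.2
    have t5 := ha.1
    have t6 := hc.2
    simp only at t1 t2
    exact ⟨by omega, by omega⟩
  · rintro ⟨a1, a2⟩ ha ⟨b1, b2⟩ hb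
    refine (hc a1 a2 ha).trans ?_
    have := hc b1 b2 hb
    refine Relation.ReflTransGen.mono ?_ _ _ (Relation.ReflTransGen.swap _ _ this)
    rintro u v ⟨x, y, z⟩
    exact ⟨y, x, z.symm⟩
  · intro j
    by_contra hcon
    have key : ∀ i : Fin (k + 1), j.val < (f i).1 := by
      intro i
      induction i using Fin.induction with
      | zero =>
        by_contra hh
        exact hcon ⟨0, by simpa using hh, by simp only [h1]; omega⟩
      | succ i ih =>
        by_contra hh
        obtain ⟨s1, s2, s3⟩ := h3 i
        exact hcon ⟨i.succ, by simpa using hh, by simp only; omega⟩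
    have := key (Fin.last k)
    omega

theorem exists_phi (I : Set (Fin (k + 1) × Fin (m + 1))) (hI : IsIntervalSet I)
    (hr : ∀ i : Fin (k + 1), ∃ j : Fin (m + 1), (i, j) ∈ I)
    (hc : ∀ j : Fin (m + 1), ∃ i : Fin (k + 1), (i, j) ∈ I) :
    ∃ f ∈ Tot k m, Phi k m f = I := by
  obtain ⟨-, hconv, hconn⟩ := hI
  have hl : ∀ i, ∃ l : Fin (m + 1), (i, l) ∈ I ∧ ∀ j, (i, j) ∈ I → l ≤ j := by
    intro i
    obtain ⟨l, h1, h2⟩ := Set.exists_min_image {j | (i, j) ∈ I} id (Set.toFinite _) (hr i)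
    exact ⟨l, h1, h2⟩
  have hR : ∀ i, ∃ l : Fin (m + 1), (i, l) ∈ I ∧ ∀ j, (i, j) ∈ I → j ≤ l := by
    intro i
    obtain ⟨l, h1, h2⟩ := Set.exists_max_image {j | (i, j) ∈ I} id (Set.toFinite _) (hr i)
    exact ⟨l, h1, h2⟩
  choose l l1 l2 using hl
  choose r r1 r2 using hR
  have la : Antitone l := by
    intro i i' hii
    by_contra hlt
    push Not at hlt
    have : (i', l i) ∈ I := hconv (l1 i) (l1 i') ⟨hii, le_rfl⟩ ⟨le_rfl, hlt.le⟩
    exact absurd (l2 _ _ this) (not_le.2 hlt)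
  have ra : Antitone r := by
    intro i i' hii
    by_contra hlt
    push Not at hlt
    have : (i, r i') ∈ I := hconv (r1 i) (r1 i') ⟨le_rfl, hlt.le⟩ ⟨hii, le_rfl⟩
    exact absurd (r2 _ _ this) (not_le.2 hlt)
  refine ⟨fun i => ((l i).val, (r i).val), (mem_Tot _ _ _).2 ⟨?_, ?_, ?_, ?_⟩, ?_⟩
  · simp only; omega
  · obtain ⟨i, hi⟩ := hc (Fin.last m)
    have a : Fin.last m ≤ r 0 := (r2 _ _ hi).trans (ra (Fin.zero_le i))
    have a' : m ≤ (r 0).val := a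
    simp only; omega
  · obtain ⟨i, hi⟩ := hc 0
    have a : l (Fin.last k) ≤ 0 := (la (Fin.le_last i)).trans (l2 _ _ hi)
    simpa using a
  · intro i
    refine ⟨la (Fin.castSucc_le_succ i), ?_, ra (Fin.castSucc_le_succ i)⟩
    by_contra hlt
    have hlt : r i.succ < l i.castSucc := not_le.1 hlt
    have key : ∀ x, Relation.ReflTransGen (fun u v : Fin (k + 1) × Fin (m + 1) =>
        u ∈ I ∧ v ∈ I ∧ (u ≤ v ∨ v ≤ u)) (i.castSucc, l i.castSucc) x → x.1 ≤ i.castSucc := by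
      intro x hx
      induction hx with
      | refl => exact le_rfl
      | @tail u v _ huv ih =>
        obtain ⟨hu, hv, huv⟩ := huv
        by_contra hcon
        have hv1 : i.succ ≤ v.1 := by
          rw [not_le] at hcon
          exact Fin.castSucc_lt_iff_succ_le.1 hcon
        have c1 : l i.castSucc ≤ u.2 := (la ih).trans (l2 _ _ hu)
        have c2 : v.2 ≤ r i.succ := (r2 _ _ hv).trans (ra hv1)
        rcases huv with h | h
        · exact absurd (c1.trans (h.2.trans c2)) (not_le.2 hlt)
        · exact hcon (h.1.trans ih)
    have := key _ (hconn _ (l1 i.castSucc) _ (l1 i.succ))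
    exact absurd this (not_le.2 (Fin.castSucc_lt_succ))
  · ext ⟨i, j⟩
    constructor
    · rintro ⟨a, b⟩
      exact hconv (l1 i) (r1 i) ⟨le_rfl, a⟩ ⟨le_rfl, b⟩
    · intro h
      exact ⟨l2 _ _ h, r2 _ _ h⟩

end

/-- The number of intervals of `Fin h × Fin w` whose two
coordinate projections are both surjective equals the Narayana number
`N(h+w-1, h) = C(h+w-1, h-1) * C(h+w-1, w-1) / (h+w-1)`. -/
theorem card_full_intervals_eq_narayana (h w : ℕ) (hh : 0 < h) (hw : 0 < w) :
    {I : Set (Fin h × Fin w) | IsIntervalSet I ∧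
        (∀ i : Fin h, ∃ j : Fin w, (i, j) ∈ I) ∧
        (∀ j : Fin w, ∃ i : Fin h, (i, j) ∈ I)}.ncard
      = Nat.choose (h + w - 1) (h - 1) * Nat.choose (h + w - 1) (w - 1)
          / (h + w - 1) := by
  obtain ⟨k, rfl⟩ : ∃ k, h = k + 1 := ⟨h - 1, by omega⟩
  obtain ⟨m, rfl⟩ : ∃ m, w = m + 1 := ⟨w - 1, by omega⟩
  rw [← card_Tot k m, ← Set.ncard_coe_finset, ← Set.ncard_image_of_injOn phi_inj]
  congr 1
  ext I
  constructor
  · rintro ⟨a, b, c⟩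
    obtain ⟨f, hf, e⟩ := exists_phi I a b c
    exact ⟨f, hf, e⟩
  · rintro ⟨f, hf, rfl⟩
    exact phi_good hf
end

section
/- Let m, n be positive integers. The total number of intervals of the product poset Fin m × Fin n equals Σ_{h=1}^{m} Σ_{w=1}^{n} (m−h+1)(n−w+1)/(h+w−1) · C(h+w−1, h−1) · C(h+w−1, w−1). -/
open Classical

variable {P : Type} [PartialOrder P]

namespace GridCount

def cns (x : ℕ × ℕ) (f : ℕ → ℕ × ℕ) : ℕ → ℕ × ℕ
  | 0 => x
  | k + 1 => f k

@[simp] theorem cns_zero (x f) : cns x f 0 = x := rfl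
@[simp] theorem cns_succ (x f k) : cns x f (k+1) = f k := rfl

theorem cns_inj (x) : Function.Injective (cns x) := by
  intro f g h
  funext k
  exact congrFun h (k+1)

noncomputable def V : ℕ → ℕ → ℕ → Finset (ℕ → ℕ × ℕ)
  | 0, l, r => if l = 0 then {cns (l, r) (fun _ => (0,0))} else ∅
  | h + 1, l, r => (Finset.range (l+1) ×ˢ Finset.Icc l r).biUnion
      fun p => (V h p.1 p.2).image (cns (l, r))

theorem mem_V (h : ℕ) : ∀ (l r : ℕ) (f : ℕ → ℕ × ℕ), f ∈ V h l r ↔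
    f 0 = (l, r) ∧ (∀ k < h, (f (k+1)).1 ≤ (f k).1 ∧ (f k).1 ≤ (f (k+1)).2 ∧
      (f (k+1)).2 ≤ (f k).2) ∧ (f h).1 = 0 ∧ ∀ k, h < k → f k = (0, 0) := by
  induction h with
  | zero =>
    intro l r f
    unfold V
    split_ifs with hl
    · simp only [Finset.mem_singleton]
      constructor
      · rintro rfl
        refine ⟨rfl, by simp, by simpa using hl, ?_⟩
        intro k hk
        obtain ⟨k, rfl⟩ := Nat.exists_eq_succ_of_ne_zero hk.ne'
        rfl
      · rintro ⟨h0, -, -, h3⟩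
        funext k
        cases k with
        | zero => exact h0
        | succ k => exact h3 _ (Nat.succ_pos k)
    · simp only [Finset.notMem_empty, false_iff]
      rintro ⟨h0, -, h2, -⟩
      rw [h0] at h2
      exact hl h2
  | succ h ih =>
    intro l r f
    unfold V
    simp only [Finset.mem_biUnion, Finset.mem_product, Finset.mem_range, Finset.mem_Icc,
      Finset.mem_image, ih]
    constructor
    · rintro ⟨⟨l', r'⟩, ⟨hl, hr⟩, g, ⟨g0, g1, g2, g3⟩, rfl⟩
      refine ⟨rfl, ?_, g2, ?_⟩
      · intro k hk
        cases k with
        | zero => simp only [cns_zero, cns_succ, g0]; simp only at hl hr; omega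
        | succ k => exact g1 k (by omega)
      · intro k hk
        obtain ⟨k, rfl⟩ := Nat.exists_eq_succ_of_ne_zero (by omega : k ≠ 0)
        exact g3 k (by omega)
    · rintro ⟨h0, h1, h2, h3⟩
      refine ⟨f 1, ?_, fun k => f (k+1), ⟨rfl, ?_, h2, ?_⟩, ?_⟩
      · have := h1 0 (by omega)
        simp only [h0, zero_add] at this
        omega
      · intro k hk
        exact h1 (k+1) (by omega)
      · intro k hk
        exact h3 _ (by omega)
      · funext k
        cases k with
        | zero => exact h0.symm
        | succ k => rfl

theorem sum_mc (h s : ℕ) :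
    ∑ i ∈ Finset.range (s+1), (Nat.multichoose h i : ℤ) = Nat.multichoose (h+1) s := by
  induction s with
  | zero => simp
  | succ s ih =>
    rw [Finset.sum_range_succ, ih, Nat.multichoose_succ_succ]
    push_cast; ring

theorem sum_mc_Icc (h l r : ℕ) (hlr : l ≤ r) :
    ∑ i ∈ Finset.Icc l r, (Nat.multichoose h (i+1) : ℤ)
      = Nat.multichoose (h+1) (r+1) - Nat.multichoose (h+1) l := by
  induction r, hlr using Nat.le_induction with
  | base => simp [Nat.multichoose_succ_succ]
  | succ r hr ih =>
    rw [← Finset.insert_Icc_right_eq_Icc_add_one (by omega), Finset.sum_insert (by simp), ih,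
      Nat.multichoose_succ_succ h (r+1)]
    push_cast; ring

theorem card_V (h : ℕ) : ∀ (l r : ℕ), l ≤ r → ((V h l r).card : ℤ) =
    Nat.multichoose h l * Nat.multichoose (h+1) (r+1)
      - Nat.multichoose (h+1) l * Nat.multichoose h (r+1) := by
  induction h with
  | zero =>
    intro l r _
    unfold V
    cases l <;> simp
  | succ h ih =>
    intro l r hlr
    unfold V
    rw [Finset.card_biUnion]
    · push_cast
      rw [Finset.sum_product]
      have : ∀ x ∈ Finset.range (l+1), ∀ y ∈ Finset.Icc l r,
          ((((V h x y).image (cns (l, r))).card : ℕ) : ℤ) =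
          Nat.multichoose h x * Nat.multichoose (h+1) (y+1)
            - Nat.multichoose (h+1) x * Nat.multichoose h (y+1) := by
        intro x hx y hy
        rw [Finset.card_image_of_injective _ (cns_inj _)]
        simp only [Finset.mem_range, Finset.mem_Icc] at hx hy
        exact ih x y (by omega)
      rw [Finset.sum_congr rfl fun x hx => Finset.sum_congr rfl fun y hy => this x hx y hy]
      simp only [Finset.sum_sub_distrib, ← Finset.mul_sum, ← Finset.sum_mul, sum_mc,
        sum_mc_Icc _ _ _ hlr]
      ring
    · rintro p - q - hpq
      rw [Function.onFun, Finset.disjoint_left]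
      intro f hf hg
      simp only [Finset.mem_image, mem_V] at hf hg
      obtain ⟨f1, ⟨hf0, -⟩, rfl⟩ := hf
      obtain ⟨g1, ⟨hg0, -⟩, hg⟩ := hg
      have := cns_inj _ hg
      subst this
      exact hpq (hf0.symm.trans hg0)

noncomputable def U (h w : ℕ) : Finset (ℕ → ℕ × ℕ) :=
  (Finset.range w).biUnion fun l => V (h-1) l (w-1)

theorem card_U (h w : ℕ) (hh : 1 ≤ h) (hw : 1 ≤ w) :
    (U h w).card = Nat.choose (h + w - 1) (h - 1) * Nat.choose (h + w - 1) (w - 1)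
              / (h + w - 1) := by
  obtain ⟨h, rfl⟩ := Nat.exists_eq_add_of_le' hh
  obtain ⟨w, rfl⟩ := Nat.exists_eq_add_of_le' hw
  symm
  apply Nat.div_eq_of_eq_mul_left (by omega)
  have hc : ((U (h+1) (w+1)).card : ℤ) =
      Nat.multichoose (h+1) w * Nat.multichoose (h+1) (w+1)
        - Nat.multichoose (h+2) w * Nat.multichoose h (w+1) := by
    unfold U
    rw [Finset.card_biUnion]
    · push_cast
      rw [Finset.sum_congr rfl fun l hl => card_V h l w
        (by simp only [Finset.mem_range] at hl; omega)]
      simp only [Finset.sum_sub_distrib, ← Finset.sum_mul, sum_mc]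
    · rintro p - q - hpq
      rw [Function.onFun, Finset.disjoint_left]
      intro f hf hg
      simp only [mem_V] at hf hg
      have := hf.1.symm.trans hg.1
      simp at this
      exact hpq this
  have e1 : h + 1 + (w + 1) - 1 = h + w + 1 := by omega
  rw [e1]
  simp only [Nat.add_sub_cancel]
  zify
  rw [hc]
  have m1 : Nat.multichoose (h+1) w = (h+w).choose w := by
    rw [Nat.multichoose_eq]; congr 1; omega
  have m2 : Nat.multichoose (h+1) (w+1) = (h+w+1).choose h := by
    rw [Nat.multichoose_eq, ← Nat.choose_symm_of_eq_add (n := h+w+1) (a := w+1) (b := h) (by omega)]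
    congr 1
  have m3 : Nat.multichoose (h+2) w = (h+w+1).choose w := by
    rw [Nat.multichoose_eq]; congr 1; omega
  have m4 : Nat.multichoose h (w+1) = (h+w).choose (w+1) := by
    rw [Nat.multichoose_eq]; rfl
  rw [m1, m2, m3, m4]
  have c1 : (h+w+1).choose w * (h+1) = (h+w+1) * (h+w).choose w := by
    have := Nat.add_one_mul_choose_eq (h+w) h
    rw [← Nat.choose_symm_of_eq_add (n := h+w+1) (a := h+1) (b := w) (by omega),
      ← Nat.choose_symm_of_eq_add (n := h+w) (a := h) (b := w) (by omega)]
    omega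
  have c2 : (h+w+1).choose h * h = (h+w+1) * (h+w).choose (w+1) := by
    have h1 := Nat.add_one_mul_choose_eq (h+w) (w+1)
    have h2 := Nat.choose_mul_succ_eq (h+w) (w+1)
    rw [← Nat.choose_symm_of_eq_add (n := h+w+1) (a := w+1) (b := h) (by omega)]
    have : h+w+1-(w+1) = h := by omega
    rw [this] at h2
    linarith
  zify at c1 c2
  linear_combination ((h+w+1).choose h : ℤ) * c1 - ((h+w+1).choose w : ℤ) * c2

/-- good data -/
structure Good (h w : ℕ) (f : ℕ → ℕ × ℕ) : Prop where
  le : (f 0).1 ≤ (f 0).2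
  w0 : (f 0).2 + 1 = w
  step : ∀ k < h, (f (k+1)).1 ≤ (f k).1 ∧ (f k).1 ≤ (f (k+1)).2 ∧ (f (k+1)).2 ≤ (f k).2
  last : (f h).1 = 0
  out : ∀ k, h < k → f k = (0, 0)

theorem mem_U (h w : ℕ) (hw : 1 ≤ w) (f) : f ∈ U h w ↔ Good (h-1) w f := by
  unfold U
  simp only [Finset.mem_biUnion, Finset.mem_range, mem_V]
  constructor
  · rintro ⟨l, hl, h0, h1, h2, h3⟩
    exact ⟨by rw [h0]; simp only; omega, by rw [h0]; simp only; omega, h1, h2, h3⟩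
  · rintro ⟨h0, h1, h2, h3, h4⟩
    exact ⟨(f 0).1, by omega, Prod.ext rfl (by simp only; omega), h2, h3, h4⟩

def Pr (h a b : ℕ) (f : ℕ → ℕ × ℕ) (i j : ℕ) : Prop :=
  a ≤ i ∧ i ≤ a + h ∧ b + (f (i-a)).1 ≤ j ∧ j ≤ b + (f (i-a)).2

theorem Good.anti {h w f} (g : Good h w f) : ∀ d k, k + d ≤ h →
    (f (k+d)).1 ≤ (f k).1 ∧ (f (k+d)).2 ≤ (f k).2 := by
  intro d
  induction d with
  | zero => intro k _; simp
  | succ d ih =>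
    intro k hk
    have h1 := ih k (by omega)
    have h2 := g.step (k+d) (by omega)
    rw [← add_assoc]
    omega

theorem Good.anti' {h w f} (g : Good h w f) {k k'} (h1 : k ≤ k') (h2 : k' ≤ h) :
    (f k').1 ≤ (f k).1 ∧ (f k').2 ≤ (f k).2 := by
  have := g.anti (k'-k) k (by omega)
  rwa [Nat.add_sub_cancel' h1] at this

theorem Good.lr {h w f} (g : Good h w f) : ∀ k, k ≤ h → (f k).1 ≤ (f k).2 := by
  intro k hk
  cases k with
  | zero => exact g.le
  | succ k => have := g.step k (by omega); omega

theorem Pr_inj {h a b w f h' a' b' w' f'} (g : Good h w f) (g' : Good h' w' f')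
    (e : ∀ i j, Pr h a b f i j ↔ Pr h' a' b' f' i j) :
    h = h' ∧ w = w' ∧ a = a' ∧ b = b' ∧ f = f' := by
  have P1 : ∀ k ≤ h, Pr h a b f (a+k) (b + (f k).1) ∧ Pr h a b f (a+k) (b + (f k).2) := by
    intro k hk
    have := g.lr k hk
    unfold Pr
    rw [Nat.add_sub_cancel_left]
    omega
  have P2 : ∀ k ≤ h', Pr h' a' b' f' (a'+k) (b' + (f' k).1) ∧
      Pr h' a' b' f' (a'+k) (b' + (f' k).2) := by
    intro k hk
    have := g'.lr k hk
    unfold Pr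
    rw [Nat.add_sub_cancel_left]
    omega
  have ha : a = a' := by
    have h1 := (e _ _).1 (P1 0 (by omega)).1
    have h2 := (e _ _).2 (P2 0 (by omega)).1
    have := h1.1
    have := h2.1
    omega
  subst ha
  have hh : h = h' := by
    have h1 := (e _ _).1 (P1 h (by omega)).1
    have h2 := (e _ _).2 (P2 h' (by omega)).1
    have := h1.2.1
    have := h2.2.1
    omega
  subst hh
  have key : ∀ k ≤ h, b + (f k).1 = b' + (f' k).1 ∧ b + (f k).2 = b' + (f' k).2 := by
    intro k hk
    have h1 := (e _ _).1 (P1 k hk).1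
    have h2 := (e _ _).1 (P1 k hk).2
    have h3 := (e _ _).2 (P2 k hk).1
    have h4 := (e _ _).2 (P2 k hk).2
    unfold Pr at h1 h2 h3 h4
    rw [Nat.add_sub_cancel_left] at h1 h2 h3 h4
    omega
  have hb : b = b' := by
    have := key h le_rfl
    have := g.last
    have := g'.last
    omega
  subst hb
  refine ⟨rfl, ?_, rfl, rfl, ?_⟩
  · have := key 0 (by omega)
    have := g.w0
    have := g'.w0
    omega
  · funext k
    by_cases hk : k ≤ h
    · have := key k hk
      exact Prod.ext (by omega) (by omega)
    · rw [g.out k (by omega), g'.out k (by omega)]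

def S (m n h a b : ℕ) (f : ℕ → ℕ × ℕ) : Set (Fin m × Fin n) :=
  {p | Pr h a b f p.1 p.2}

theorem S_interval {m n h w a b f} (g : Good h w f) (ha : a + h < m) (hb : b + w ≤ n) :
    IsIntervalSet (S m n h a b f) := by
  have w0 := g.w0
  have bd : ∀ k ≤ h, b + (f k).2 < n := by
    intro k hk
    have := g.anti' (Nat.zero_le k) hk
    omega
  have base : Pr h a b f a (b + (f 0).1) := by
    have := g.le
    unfold Pr
    rw [Nat.sub_self]
    omega
  have hl0 := g.le
  refine ⟨⟨(⟨a, by omega⟩, ⟨b + (f 0).1, by omega⟩), base⟩, ?_, ?_⟩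
  · rintro ⟨x1, x2⟩ ⟨y1, y2⟩ ⟨z1, z2⟩ hx hz hxy hyz
    simp only [S, Set.mem_ofPred_eq, Pr, Prod.mk_le_mk, Fin.le_def] at *
    have h1 := g.anti' (k := x1 - a) (k' := y1 - a) (by omega) (by omega)
    have h2 := g.anti' (k := y1 - a) (k' := z1 - a) (by omega) (by omega)
    omega
  · have main : ∀ k, k ≤ h → ∀ p : Fin m × Fin n, p ∈ S m n h a b f → p.1.val = a + k →
        Relation.ReflTransGen (fun u v : Fin m × Fin n => u ∈ S m n h a b f ∧
          v ∈ S m n h a b f ∧ (u ≤ v ∨ v ≤ u)) p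
          (⟨a, by omega⟩, ⟨b + (f 0).1, by omega⟩) := by
      intro k
      induction k with
      | zero =>
        intro _ p hp hpa
        refine Relation.ReflTransGen.single ⟨hp, base, Or.inr ?_⟩
        simp only [S, Set.mem_ofPred_eq, Pr, hpa] at hp
        rw [Nat.add_sub_cancel_left] at hp
        exact ⟨by simp [Fin.le_def, hpa], by simp only [Fin.le_def]; omega⟩
      | succ k ih =>
        intro hk p hp hpa
        have st := g.step k (by omega)
        have b1 := bd (k+1) hk
        have b2 := g.lr k (by omega)
        have hq : ((⟨a+(k+1), by omega⟩, ⟨b + (f k).1, by omega⟩) : Fin m × Fin n) ∈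
            S m n h a b f := by
          simp only [S, Set.mem_ofPred_eq, Pr]
          rw [Nat.add_sub_cancel_left]
          omega
        have hr : ((⟨a+k, by omega⟩, ⟨b + (f k).1, by omega⟩) : Fin m × Fin n) ∈
            S m n h a b f := by
          simp only [S, Set.mem_ofPred_eq, Pr]
          rw [Nat.add_sub_cancel_left]
          omega
        refine Relation.ReflTransGen.head ⟨hp, hq, ?_⟩
          (Relation.ReflTransGen.head ⟨hq, hr, Or.inr ?_⟩ (ih (by omega) _ hr rfl))
        · rcases le_total p.2.val (b + (f k).1) with h1 | h1
          · exact Or.inl ⟨by simp [Fin.le_def, hpa], by simpa [Fin.le_def] using h1⟩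
          · exact Or.inr ⟨by simp [Fin.le_def, hpa], by simpa [Fin.le_def] using h1⟩
        · exact ⟨by simp [Fin.le_def], by simp⟩
    intro p hp q hq
    have h1 := main (p.1 - a) (by have := hp.2.1; omega) p hp (by have := hp.1; omega)
    have h2 := main (q.1 - a) (by have := hq.2.1; omega) q hq (by have := hq.1; omega)
    refine h1.trans ?_
    have hs : Std.Symm (fun u v : Fin m × Fin n => u ∈ S m n h a b f ∧
          v ∈ S m n h a b f ∧ (u ≤ v ∨ v ≤ u)) :=
      ⟨fun x y hxy => ⟨hxy.2.1, hxy.1, hxy.2.2.symm⟩⟩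
    exact Relation.ReflTransGen.stdSymm.symm _ _ h2

theorem interval_S {m n} (I : Set (Fin m × Fin n)) (hI : IsIntervalSet I) :
    ∃ h w a b f, Good h w f ∧ a + h < m ∧ b + w ≤ n ∧ I = S m n h a b f := by
  obtain ⟨⟨p0, hp0⟩, hcv, hcn⟩ := hI
  let J : ℕ → ℕ → Prop := fun i j => ∃ p ∈ I, p.1.val = i ∧ p.2.val = j
  have Jm : ∀ i j, J i j → i < m ∧ j < n := by
    rintro i j ⟨p, -, rfl, rfl⟩
    exact ⟨p.1.2, p.2.2⟩
  have Jcv : ∀ i j i' j' i'' j'', J i j → J i'' j'' → i ≤ i' → i' ≤ i'' → j ≤ j' → j' ≤ j'' →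
      J i' j' := by
    intro i j i' j' i'' j'' h1 h2 k1 k2 k3 k4
    have := Jm _ _ h2
    obtain ⟨p, hp, rfl, rfl⟩ := h1
    obtain ⟨q, hq, rfl, rfl⟩ := h2
    exact ⟨(⟨i', by omega⟩, ⟨j', by omega⟩), hcv hp hq ⟨k1, k3⟩ ⟨k2, k4⟩, rfl, rfl⟩
  have ov : ∀ i, (∃ p ∈ I, p.1.val ≤ i) → (∃ q ∈ I, i < q.1.val) → ∃ j, J i j ∧ J (i+1) j := by
    rintro i ⟨p, hp, hpi⟩ ⟨q, hq, hqi⟩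
    have : ∀ x, Relation.ReflTransGen (fun u v => u ∈ I ∧ v ∈ I ∧ (u ≤ v ∨ v ≤ u)) p x →
        (x.1.val ≤ i ∨ ∃ j, J i j ∧ J (i+1) j) := by
      intro x hx
      induction hx with
      | refl => exact Or.inl hpi
      | @tail u v _ huv ih =>
        rcases ih with ih | ih
        · obtain ⟨hu, hv, huv⟩ := huv
          by_cases hvi : v.1.val ≤ i
          · exact Or.inl hvi
          · right
            have huv' : u ≤ v := by
              rcases huv with h | h
              · exact h
              · have := h.1
                rw [Fin.le_def] at this
                omega
            have u1 := huv'.1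
            have u2 := huv'.2
            rw [Fin.le_def] at u1 u2
            have Ju : J u.1 u.2 := ⟨u, hu, rfl, rfl⟩
            have Jv : J v.1 v.2 := ⟨v, hv, rfl, rfl⟩
            exact ⟨u.2, Jcv _ _ _ _ _ _ Ju Jv ih (by omega) le_rfl u2,
              Jcv _ _ _ _ _ _ Ju Jv (by omega) (by omega) le_rfl u2⟩
        · exact Or.inr ih
    rcases this q (hcn p hp q hq) with h | h
    · omega
    · exact h
  -- min and max rows
  obtain ⟨pa, hpa, hamin⟩ := Set.exists_min_image I (fun p => p.1.val) (Set.toFinite I) ⟨p0, hp0⟩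
  obtain ⟨pz, hpz, hzmax⟩ := Set.exists_max_image I (fun p => p.1.val) (Set.toFinite I) ⟨p0, hp0⟩
  have haz := hamin pz hpz
  obtain ⟨a, ha⟩ : ∃ a, a = pa.1.val := ⟨_, rfl⟩
  obtain ⟨h, hh⟩ : ∃ h, h = pz.1.val - pa.1.val := ⟨_, rfl⟩
  have ne : ∀ k, k ≤ h → ∃ j, J (a+k) j := by
    intro k hk
    by_cases hkh : k = h
    · exact ⟨pz.2, pz, hpz, by omega, rfl⟩
    · obtain ⟨j, hj, -⟩ := ov (a+k) ⟨pa, hpa, by omega⟩ ⟨pz, hpz, by omega⟩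
      exact ⟨j, hj⟩
  have ex : ∀ k, ∃ lr : ℕ × ℕ, k ≤ h → (J (a+k) lr.1 ∧ J (a+k) lr.2 ∧
      ∀ j, J (a+k) j → lr.1 ≤ j ∧ j ≤ lr.2) := by
    intro k
    by_cases hk : k ≤ h
    · have fin : {j | J (a+k) j}.Finite :=
        (Set.finite_lt_nat n).subset fun j hj => (Jm _ _ hj).2
      obtain ⟨l, hl, hl'⟩ := Set.exists_min_image _ id fin (ne k hk)
      obtain ⟨r, hr, hr'⟩ := Set.exists_max_image _ id fin (ne k hk)
      exact ⟨(l, r), fun _ => ⟨hl, hr, fun j hj => ⟨hl' j hj, hr' j hj⟩⟩⟩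
    · exact ⟨(0,0), fun h => absurd h hk⟩
  choose lr hlr using ex
  have step : ∀ k, k < h → (lr (k+1)).1 ≤ (lr k).1 ∧ (lr k).1 ≤ (lr (k+1)).2 ∧
      (lr (k+1)).2 ≤ (lr k).2 := by
    intro k hk
    obtain ⟨j, hj, hj'⟩ := ov (a+k) ⟨pa, hpa, by omega⟩ ⟨pz, hpz, by omega⟩
    obtain ⟨A1, A2, A3⟩ := hlr k (by omega)
    obtain ⟨B1, B2, B3⟩ := hlr (k+1) (by omega)
    rw [← add_assoc] at B1 B2 B3
    have j1 := A3 j hj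
    have j2 := B3 j hj'
    refine ⟨?_, by omega, ?_⟩
    · exact (B3 _ (Jcv _ _ (a+k+1) (lr k).1 _ _ A1 hj' (by omega) le_rfl le_rfl j1.1)).1
    · exact (A3 _ (Jcv _ _ (a+k) (lr (k+1)).2 _ _ hj B2 le_rfl (by omega) j2.2 le_rfl)).2
  have anti : ∀ d k, k + d = h → (lr h).1 ≤ (lr k).1 := by
    intro d
    induction d with
    | zero => intro k hk; simp at hk; rw [hk]
    | succ d ih =>
      intro k hk
      have := ih (k+1) (by omega)
      have := step k (by omega)
      omega
  obtain ⟨b, hb⟩ : ∃ b, b = (lr h).1 := ⟨_, rfl⟩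
  have hbk : ∀ k ≤ h, b ≤ (lr k).1 ∧ (lr k).1 ≤ (lr k).2 := by
    intro k hk
    obtain ⟨A1, A2, A3⟩ := hlr k hk
    exact ⟨hb ▸ anti (h-k) k (by omega), (A3 _ A1).2⟩
  have h00 := hbk 0 (by omega)
  have hr0 := (Jm _ _ (hlr 0 (by omega)).2.1).2
  have hzm := pz.1.2
  refine ⟨h, (lr 0).2 - b + 1, a, b, fun k => if k ≤ h then ((lr k).1 - b, (lr k).2 - b) else (0,0),
    ⟨?_, ?_, ?_, ?_, ?_⟩, by omega, by omega, ?_⟩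
  · simp only [Nat.zero_le, if_true]; omega
  · simp only [Nat.zero_le, if_true]
  · intro k hk
    have := step k hk
    rw [if_pos (by omega), if_pos (by omega)]
    simp only
    omega
  · simp [hb]
  · intro k hk
    rw [if_neg (by omega)]
  · ext p
    simp only [S, Set.mem_ofPred_eq, Pr]
    constructor
    · intro hp
      have h1 := hamin p hp
      have h2 := hzmax p hp
      have hk : p.1.val - a ≤ h := by omega
      have h3 := (hlr _ hk).2.2 p.2 ⟨p, hp, by omega, rfl⟩
      have h4 := hbk _ hk
      rw [if_pos hk]
      simp only
      omega
    · rintro ⟨h1, h2, h3, h4⟩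
      have hk : p.1.val - a ≤ h := by omega
      rw [if_pos hk] at h3 h4
      simp only at h3 h4
      have h5 := hbk _ hk
      obtain ⟨A1, A2, A3⟩ := hlr _ hk
      obtain ⟨q, hq, q1, q2⟩ := Jcv _ _ p.1.val p.2.val _ _ A1 A2
        (by omega) (by omega) (by omega) (by omega)
      have : q = p := Prod.ext (Fin.ext q1) (Fin.ext q2)
      exact this ▸ hq

end GridCount

/-- The total number of intervals of `Fin m × Fin n`. -/
theorem card_intervals_eq_sum (m n : ℕ) (hm : 0 < m) (hn : 0 < n) :
    {I : Set (Fin m × Fin n) | IsIntervalSet I}.ncard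
      = ∑ h ∈ Finset.Icc 1 m, ∑ w ∈ Finset.Icc 1 n,
          (m - h + 1) * (n - w + 1) *
            (Nat.choose (h + w - 1) (h - 1) * Nat.choose (h + w - 1) (w - 1)
              / (h + w - 1)) := by
  let T := (Finset.Icc 1 m ×ˢ Finset.Icc 1 n).sigma (fun p : ℕ × ℕ =>
    (Finset.range (m - p.1 + 1) ×ˢ Finset.range (n - p.2 + 1)) ×ˢ GridCount.U p.1 p.2)
  let F : (Σ _ : ℕ × ℕ, (ℕ × ℕ) × (ℕ → ℕ × ℕ)) → Set (Fin m × Fin n) := fun x =>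
    GridCount.S m n (x.1.1 - 1) x.2.1.1 x.2.1.2 x.2.2
  have hT : ∀ x, x ∈ T ↔ ((1 ≤ x.1.1 ∧ x.1.1 ≤ m) ∧ (1 ≤ x.1.2 ∧ x.1.2 ≤ n)) ∧
      (x.2.1.1 < m - x.1.1 + 1 ∧ x.2.1.2 < n - x.1.2 + 1) ∧
      x.2.2 ∈ GridCount.U x.1.1 x.1.2 := by
    intro x
    simp only [T, Finset.mem_sigma, Finset.mem_product, Finset.mem_Icc, Finset.mem_range]
  have himg : {I : Set (Fin m × Fin n) | IsIntervalSet I} = F '' (T : Set _) := by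
    ext I
    simp only [Set.mem_ofPred_eq, Set.mem_image, Finset.mem_coe, hT]
    constructor
    · intro hI
      obtain ⟨h, w, a, b, f, g, h1, h2, rfl⟩ := GridCount.interval_S I hI
      have := g.w0
      refine ⟨⟨(h+1, w), ((a, b), f)⟩, ⟨⟨⟨?_, ?_⟩, ?_, ?_⟩, ⟨?_, ?_⟩, ?_⟩, rfl⟩
      iterate 6 (show (_ : ℕ) ≤ _; dsimp only; omega)
      exact (GridCount.mem_U (h+1) w (by omega) _).2 g
    · rintro ⟨⟨⟨h, w⟩, ⟨a, b⟩, f⟩, ⟨h1, h2, h3⟩, rfl⟩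
      simp only at h1 h2 h3
      exact GridCount.S_interval ((GridCount.mem_U _ _ (by omega) _).1 h3)
        (by simp only; omega) (by simp only; omega)
  have hinj : Set.InjOn F (T : Set _) := by
    rintro ⟨⟨h, w⟩, ⟨a, b⟩, f⟩ hx ⟨⟨h', w'⟩, ⟨a', b'⟩, f'⟩ hy hxy
    rw [Finset.mem_coe, hT] at hx hy
    obtain ⟨h1, h2, h3⟩ := hx
    obtain ⟨h1', h2', h3'⟩ := hy
    simp only at h1 h2 h3 h1' h2' h3'
    have g := (GridCount.mem_U _ _ (by omega) _).1 h3
    have g' := (GridCount.mem_U _ _ (by omega) _).1 h3'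
    have bd : ∀ {h w a b f} (_ : GridCount.Good (h-1) w f) (_ : 1 ≤ h) (_ : h ≤ m) (_ : w ≤ n)
        (_ : a < m - h + 1) (_ : b < n - w + 1),
        ∀ i j, GridCount.Pr (h-1) a b f i j → i < m ∧ j < n := by
      intro h w a b f g k1 k2 k3 k4 k5 i j hP
      unfold GridCount.Pr at hP
      have := g.anti' (Nat.zero_le (i-a)) (by omega)
      have := g.w0
      omega
    obtain ⟨e1, rfl, rfl, rfl, rfl⟩ := GridCount.Pr_inj (a := a) (b := b) (a' := a') (b' := b') g g' (by
      intro i j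
      constructor
      · intro hP
        obtain ⟨hi, hj⟩ := bd g (by omega) (by omega) (by omega) (by omega) (by omega) i j hP
        have : ((⟨i, hi⟩, ⟨j, hj⟩) : Fin m × Fin n) ∈ GridCount.S m n (h-1) a b f := hP
        exact (Set.ext_iff.1 hxy _).1 this
      · intro hP
        obtain ⟨hi, hj⟩ := bd g' (by omega) (by omega) (by omega) (by omega) (by omega) i j hP
        have : ((⟨i, hi⟩, ⟨j, hj⟩) : Fin m × Fin n) ∈ GridCount.S m n (h'-1) a' b' f' := hP
        exact (Set.ext_iff.1 hxy _).2 this)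
    have : h = h' := by omega
    subst this
    rfl
  rw [himg, hinj.ncard_image, Set.ncard_coe_finset, Finset.card_sigma,
    Finset.sum_product]
  refine Finset.sum_congr rfl fun h hh => Finset.sum_congr rfl fun w hw => ?_
  rw [Finset.mem_Icc] at hh hw
  rw [Finset.card_product, Finset.card_product, Finset.card_range, Finset.card_range,
    GridCount.card_U h w hh.1 hw.1]
end

section
/- For every positive integer n, the number of intervals of the product poset Fin 2 × Fin n equals n(n+1)(n² + 5n + 30)/24. -/
open Classical

variable {P : Type} [PartialOrder P]

def rowS (n : ℕ) (i : Fin 2) (a b : ℕ) : Set (Fin 2 × Fin n) :=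
  {p | p.1 = i ∧ a ≤ p.2.val ∧ p.2.val ≤ b}

def twoS (n : ℕ) (c a d b : ℕ) : Set (Fin 2 × Fin n) :=
  {p | (p.1 = 0 ∧ a ≤ p.2.val ∧ p.2.val ≤ b) ∨ (p.1 = 1 ∧ c ≤ p.2.val ∧ p.2.val ≤ d)}

lemma conn_of_hub {Q : Type} [PartialOrder Q] (I : Set Q) (u v : Q) (hu : u ∈ I) (hv : v ∈ I)
    (huv : u ≤ v) (h : ∀ p ∈ I, u ≤ p ∨ p ≤ v) : IsConnectedSet I := by
  have h1 : ∀ p ∈ I, Relation.ReflTransGen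
      (fun u v : Q => u ∈ I ∧ v ∈ I ∧ (u ≤ v ∨ v ≤ u)) p u := by
    intro p hp
    rcases h p hp with h | h
    · exact Relation.ReflTransGen.single ⟨hp, hu, Or.inr h⟩
    · exact (Relation.ReflTransGen.single ⟨hp, hv, Or.inl h⟩).tail ⟨hv, hu, Or.inr huv⟩
  have h2 : ∀ p ∈ I, Relation.ReflTransGen
      (fun u v : Q => u ∈ I ∧ v ∈ I ∧ (u ≤ v ∨ v ≤ u)) u p := by
    intro p hp
    rcases h p hp with h | h
    · exact Relation.ReflTransGen.single ⟨hu, hp, Or.inl h⟩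
    · exact (Relation.ReflTransGen.single ⟨hu, hv, Or.inl huv⟩).tail ⟨hv, hp, Or.inr h⟩
  intro a ha b hb
  exact (h1 a ha).trans (h2 b hb)

lemma row_interval (n : ℕ) (i : Fin 2) (a b : ℕ) (hab : a ≤ b) (hb : b < n) :
    IsIntervalSet (rowS n i a b) := by
  have hm : ((i, ⟨a, by omega⟩) : Fin 2 × Fin n) ∈ rowS n i a b := ⟨rfl, le_refl _, hab⟩
  refine ⟨⟨_, hm⟩, ?_, conn_of_hub _ _ _ hm hm le_rfl ?_⟩
  · rintro ⟨x1, x2⟩ ⟨y1, y2⟩ ⟨z1, z2⟩ ⟨h1, h2, h3⟩ ⟨h4, h5, h6⟩ ⟨h7, h8⟩ ⟨h9, h10⟩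
    simp only [Fin.le_def] at *
    refine ⟨?_, ?_, ?_⟩
    · subst h1; simp only at *; apply Fin.ext; subst h4; omega
    · simp only; omega
    · simp only; omega
  · rintro ⟨x1, x2⟩ ⟨h1, h2, h3⟩
    left
    exact ⟨le_of_eq h1.symm, h2⟩

lemma two_interval (n : ℕ) (c a d b : ℕ) (hca : c ≤ a) (had : a ≤ d) (hdb : d ≤ b) (hb : b < n) :
    IsIntervalSet (twoS n c a d b) := by
  have hm : ((0, ⟨a, by omega⟩) : Fin 2 × Fin n) ∈ twoS n c a d b :=
    Or.inl ⟨rfl, le_refl _, by simp only; omega⟩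
  have hm' : ((1, ⟨d, by omega⟩) : Fin 2 × Fin n) ∈ twoS n c a d b :=
    Or.inr ⟨rfl, by simp only; omega, le_refl _⟩
  refine ⟨⟨_, hm⟩, ?_, conn_of_hub _ _ _ hm hm' ⟨by simp, had⟩ ?_⟩
  · rintro ⟨x1, x2⟩ ⟨y1, y2⟩ ⟨z1, z2⟩ hx hz ⟨h7, h8⟩ ⟨h9, h10⟩
    simp only [Fin.le_def, twoS, Set.mem_setOf_eq, Fin.ext_iff, Fin.val_zero, Fin.val_one] at *
    omega
  · rintro ⟨x1, x2⟩ (⟨h1, h2, h3⟩ | ⟨h1, h2, h3⟩)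
    · left
      exact ⟨le_of_eq h1.symm, h2⟩
    · right
      exact ⟨le_of_eq h1, h3⟩

lemma row_shape (n : ℕ) (A : Set (Fin n)) (hne : A.Nonempty)
    (hc : ∀ x ∈ A, ∀ z ∈ A, ∀ y, x ≤ y → y ≤ z → y ∈ A) :
    ∃ a b : Fin n, a ∈ A ∧ b ∈ A ∧ a ≤ b ∧ ∀ x, x ∈ A ↔ a ≤ x ∧ x ≤ b := by
  obtain ⟨a, ha, ha'⟩ := Set.exists_min_image A id (Set.toFinite A) hne
  obtain ⟨b, hb, hb'⟩ := Set.exists_max_image A id (Set.toFinite A) hne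
  exact ⟨a, b, ha, hb, ha' b hb, fun x => ⟨fun h => ⟨ha' x h, hb' x h⟩,
    fun h => hc a ha b hb x h.1 h.2⟩⟩

lemma interval_shape (n : ℕ) (I : Set (Fin 2 × Fin n)) (hI : IsIntervalSet I) :
    (∃ i a b, a ≤ b ∧ b < n ∧ I = rowS n i a b) ∨
    (∃ c a d b, c ≤ a ∧ a ≤ d ∧ d ≤ b ∧ b < n ∧ I = twoS n c a d b) := by
  obtain ⟨hne, hconv, hconn⟩ := hI
  have key : ∀ i : Fin 2, (∃ x, (i, x) ∈ I) → ∃ a b : Fin n, (i, a) ∈ I ∧ (i, b) ∈ I ∧ a ≤ b ∧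
      ∀ x, (i, x) ∈ I ↔ a ≤ x ∧ x ≤ b := by
    intro i h
    exact row_shape n {x | (i, x) ∈ I} h
      (fun x hx z hz y h1 h2 => hconv hx hz ⟨le_rfl, h1⟩ ⟨le_rfl, h2⟩)
  have one : ∀ i : Fin 2, (∃ x, (i, x) ∈ I) → (∀ j, j ≠ i → ∀ x, (j, x) ∉ I) →
      (∃ i a b, a ≤ b ∧ b < n ∧ I = rowS n i a b) := by
    intro i h h'
    obtain ⟨a, b, -, -, hab, hx⟩ := key i h
    refine ⟨i, a, b, hab, b.2, ?_⟩
    ext ⟨j, x⟩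
    by_cases hj : j = i
    · subst hj
      rw [hx]
      simp [rowS]
    · simp [rowS, hj, h' j hj x]
  by_cases h0 : ∃ x, ((0 : Fin 2), x) ∈ I
  · by_cases h1 : ∃ x, ((1 : Fin 2), x) ∈ I
    · right
      obtain ⟨a, b, ha, hb, hab, hx⟩ := key 0 h0
      obtain ⟨c, d, hc, hd, hcd, hy⟩ := key 1 h1
      have had : a ≤ d := by
        by_contra hlt
        have : ∀ p, Relation.ReflTransGen
            (fun u v : Fin 2 × Fin n => u ∈ I ∧ v ∈ I ∧ (u ≤ v ∨ v ≤ u)) (0, a) p → p.1 = 0 := by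
          intro p hp
          induction hp with
          | refl => rfl
          | @tail q r _ hqr ih =>
            obtain ⟨q1, q2⟩ := q
            obtain ⟨r1, r2⟩ := r
            simp only at ih
            subst ih
            obtain ⟨hq, hr, hle⟩ := hqr
            by_contra hr1
            simp only at hr1
            have : r1 = 1 := by omega
            subst this
            have e1 := (hx _).1 hq
            have e2 := (hy _).1 hr
            rcases hle with hle | hle
            · exact hlt (e1.1.trans (hle.2.trans e2.2))
            · exact absurd hle.1 (by simp)
        have := this _ (hconn _ ha _ hd)
        simp at this
      have hdb : d ≤ b :=
        ((hx d).1 (hconv ha hd ⟨le_rfl, had⟩ ⟨by simp, le_rfl⟩)).2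
      have hca : c ≤ a :=
        ((hy a).1 (hconv ha hd ⟨by simp, le_rfl⟩ ⟨le_rfl, had⟩)).1
      refine ⟨c, a, d, b, hca, had, hdb, b.2, ?_⟩
      ext ⟨j, x⟩
      obtain rfl | rfl : j = 0 ∨ j = 1 := by omega
      · rw [hx]; simp [twoS]
      · rw [hy]; simp [twoS]
    · left
      refine one 0 h0 ?_
      intro j hj x hjx
      obtain rfl : j = 1 := by omega
      exact h1 ⟨x, hjx⟩
  · left
    have h1 : ∃ x, ((1 : Fin 2), x) ∈ I := by
      obtain ⟨⟨j, x⟩, hp⟩ := hne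
      obtain rfl | rfl : j = 0 ∨ j = 1 := by omega
      · exact absurd ⟨x, hp⟩ h0
      · exact ⟨x, hp⟩
    refine one 1 h1 ?_
    intro j hj x hjx
    obtain rfl : j = 0 := by omega
    exact h0 ⟨x, hjx⟩

def pairF (n : ℕ) : Finset (Σ _ : ℕ, ℕ) :=
  (Finset.range n).sigma fun b => Finset.range (b + 1)

def quadF (n : ℕ) : Finset (Σ _ : ℕ, Σ _ : ℕ, Σ _ : ℕ, ℕ) :=
  (Finset.range n).sigma fun b => (Finset.range (b + 1)).sigma fun d =>
    (Finset.range (d + 1)).sigma fun a => Finset.range (a + 1)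

lemma s1 (n : ℕ) : 2 * ∑ a ∈ Finset.range n, (a + 1) = n * (n + 1) := by
  induction n with
  | zero => rfl
  | succ k ih => rw [Finset.sum_range_succ, mul_add, ih]; ring

lemma s2 (n : ℕ) : 6 * ∑ d ∈ Finset.range n, ∑ a ∈ Finset.range (d + 1), (a + 1)
    = n * (n + 1) * (n + 2) := by
  induction n with
  | zero => rfl
  | succ k ih => rw [Finset.sum_range_succ, mul_add, ih]; linarith [s1 (k + 1)]

lemma s3 (n : ℕ) : 24 * ∑ b ∈ Finset.range n, ∑ d ∈ Finset.range (b + 1),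
    ∑ a ∈ Finset.range (d + 1), (a + 1) = n * (n + 1) * (n + 2) * (n + 3) := by
  induction n with
  | zero => rfl
  | succ k ih => rw [Finset.sum_range_succ, mul_add, ih]; linarith [s2 (k + 1)]

lemma pair_card (n : ℕ) : 2 * (pairF n).card = n * (n + 1) := by
  rw [← s1]; simp [pairF, Finset.card_sigma]

lemma quad_card (n : ℕ) : 24 * (quadF n).card = n * (n + 1) * (n + 2) * (n + 3) := by
  rw [← s3]; simp [quadF, Finset.card_sigma]

lemma icc_inj {n a b a' b' : ℕ} (hab : a ≤ b) (hb : b < n) (hab' : a' ≤ b') (hb' : b' < n)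
    (h : ∀ x : Fin n, (a ≤ x.val ∧ x.val ≤ b) ↔ (a' ≤ x.val ∧ x.val ≤ b')) : a = a' ∧ b = b' := by
  have h1 := h ⟨a, by omega⟩
  have h2 := h ⟨b, by omega⟩
  have h3 := h ⟨a', by omega⟩
  have h4 := h ⟨b', by omega⟩
  simp only at h1 h2 h3 h4
  omega

lemma row_inj {n : ℕ} {i j : Fin 2} {a b a' b' : ℕ} (hab : a ≤ b) (hb : b < n) (hab' : a' ≤ b')
    (hb' : b' < n) (h : rowS n i a b = rowS n j a' b') : i = j ∧ a = a' ∧ b = b' := by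
  have hij : i = j := by
    have : ((i, ⟨a, by omega⟩) : Fin 2 × Fin n) ∈ rowS n i a b := ⟨rfl, le_refl _, hab⟩
    rw [h] at this
    exact this.1
  subst hij
  refine ⟨rfl, icc_inj hab hb hab' hb' fun x => ?_⟩
  have := Set.ext_iff.1 h (i, x)
  simpa [rowS] using this

lemma two_inj {n c a d b c' a' d' b' : ℕ} (h1 : c ≤ a) (h2 : a ≤ d) (h3 : d ≤ b) (h4 : b < n)
    (h1' : c' ≤ a') (h2' : a' ≤ d') (h3' : d' ≤ b') (h4' : b' < n)
    (h : twoS n c a d b = twoS n c' a' d' b') : c = c' ∧ a = a' ∧ d = d' ∧ b = b' := by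
  have e0 := icc_inj (n := n) (h2.trans h3) h4 (h2'.trans h3') h4' fun x => by
    have := Set.ext_iff.1 h (0, x)
    simpa [twoS] using this
  have e1 := icc_inj (n := n) (h1.trans h2) (by omega) (h1'.trans h2') (by omega) fun x => by
    have := Set.ext_iff.1 h (1, x)
    simpa [twoS] using this
  omega

lemma row_ne_two {n c a d b a' b' : ℕ} {i : Fin 2} (h1 : c ≤ a) (h2 : a ≤ d) (h3 : d ≤ b)
    (h4 : b < n) : rowS n i a' b' ≠ twoS n c a d b := by
  intro h
  have e0 := Set.ext_iff.1 h (0, ⟨a, by omega⟩)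
  have e1 := Set.ext_iff.1 h (1, ⟨d, by omega⟩)
  simp [rowS, twoS] at e0 e1
  have := (e0.2 (by omega)).1
  have := (e1.2 (by omega)).1
  omega

/-- The number of intervals of `Fin 2 × Fin n` equals
`n (n+1) (n² + 5n + 30) / 24`. -/
theorem card_intervals_two_rows (n : ℕ) (hn : 0 < n) :
    {I : Set (Fin 2 × Fin n) | IsIntervalSet I}.ncard
      = n * (n + 1) * (n ^ 2 + 5 * n + 30) / 24 := by
  let R : Finset (Set (Fin 2 × Fin n)) :=
    ((Finset.univ : Finset (Fin 2)) ×ˢ pairF n).image fun p => rowS n p.1 p.2.2 p.2.1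
  let T : Finset (Set (Fin 2 × Fin n)) :=
    (quadF n).image fun p => twoS n p.2.2.2 p.2.2.1 p.2.1 p.1
  have hmp : ∀ p, p ∈ pairF n ↔ p.1 < n ∧ p.2 ≤ p.1 := by
    intro p; simp [pairF, Nat.lt_succ_iff]
  have hmq : ∀ p, p ∈ quadF n ↔ p.1 < n ∧ p.2.1 ≤ p.1 ∧ p.2.2.1 ≤ p.2.1 ∧ p.2.2.2 ≤ p.2.2.1 := by
    intro p; simp [quadF, Nat.lt_succ_iff]
  have hset : {I : Set (Fin 2 × Fin n) | IsIntervalSet I} = ↑(R ∪ T) := by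
    ext I
    simp only [Set.mem_setOf_eq, Finset.coe_union, Set.mem_union, Finset.mem_coe, R, T,
      Finset.mem_image, Finset.mem_product, Finset.mem_univ, true_and, hmp, hmq]
    constructor
    · intro hI
      rcases interval_shape n I hI with ⟨i, a, b, h1, h2, rfl⟩ | ⟨c, a, d, b, h1, h2, h3, h4, rfl⟩
      · exact Or.inl ⟨(i, ⟨b, a⟩), ⟨h2, h1⟩, rfl⟩
      · exact Or.inr ⟨⟨b, d, a, c⟩, ⟨h4, h3, h2, h1⟩, rfl⟩
    · rintro (⟨⟨i, b, a⟩, ⟨h2, h1⟩, rfl⟩ | ⟨⟨b, d, a, c⟩, ⟨h4, h3, h2, h1⟩, rfl⟩)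
      · exact row_interval n i a b h1 h2
      · exact two_interval n c a d b h1 h2 h3 h4
  have hdisj : Disjoint R T := by
    rw [Finset.disjoint_left]
    intro I hR hT
    simp only [R, T, Finset.mem_image, hmq] at hR hT
    obtain ⟨p, -, rfl⟩ := hR
    obtain ⟨q, ⟨h4, h3, h2, h1⟩, h⟩ := hT
    exact row_ne_two h1 h2 h3 h4 h.symm
  have hR : R.card = 2 * (pairF n).card := by
    rw [Finset.card_image_of_injOn]
    · simp [Finset.card_product]
    · rintro ⟨i, b, a⟩ hp ⟨j, b', a'⟩ hq h
      simp only [Finset.mem_coe, Finset.mem_product, Finset.mem_univ, true_and, hmp] at hp hq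
      obtain ⟨rfl, rfl, rfl⟩ := row_inj hp.2 hp.1 hq.2 hq.1 h
      rfl
  have hT : T.card = (quadF n).card := by
    rw [Finset.card_image_of_injOn]
    rintro ⟨b, d, a, c⟩ hp ⟨b', d', a', c'⟩ hq h
    simp only [Finset.mem_coe, hmq] at hp hq
    obtain ⟨rfl, rfl, rfl, rfl⟩ := two_inj hp.2.2.2 hp.2.2.1 hp.2.1 hp.1
      hq.2.2.2 hq.2.2.1 hq.2.1 hq.1 h
    rfl
  rw [hset, Set.ncard_coe_finset, Finset.card_union_of_disjoint hdisj, hR, hT, pair_card]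
  symm
  apply Nat.div_eq_of_eq_mul_right (by norm_num)
  have := quad_card n
  linarith
end

section
/- Let m, n, h, w be positive integers with 1 ≤ h ≤ m and 1 ≤ w ≤ n. The number of intervals I of Fin m × Fin n whose projection to the first coordinate has exactly h elements and whose projection to the second coordinate has exactly w elements equals (m−h+1)(n−w+1) times the number of intervals of Fin h × Fin w whose both coordinate projections are surjective. -/
open Classical

variable {P : Type} [PartialOrder P]

theorem aux_image {Q : Type} [PartialOrder Q] (f : P ↪o Q)
    (hf : IsConvexSet (Set.range f)) (J : Set P) :
    IsIntervalSet (f '' J) ↔ IsIntervalSet J := by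
  unfold IsIntervalSet
  refine and_congr Set.image_nonempty (and_congr ?_ ?_)
  · constructor
    · intro hc a b c ha hcJ hab hbc
      have := hc (Set.mem_image_of_mem f ha) (Set.mem_image_of_mem f hcJ)
        (f.le_iff_le.2 hab) (f.le_iff_le.2 hbc)
      exact (f.injective.mem_set_image).1 this
    · rintro hc _ b _ ⟨a, ha, rfl⟩ ⟨c, hcJ, rfl⟩ hab hbc
      obtain ⟨b, rfl⟩ := hf ⟨a, rfl⟩ ⟨c, rfl⟩ hab hbc
      exact ⟨b, hc ha hcJ (f.le_iff_le.1 hab) (f.le_iff_le.1 hbc), rfl⟩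
  · constructor
    · intro hc a ha b hb
      have key : ∀ y, Relation.ReflTransGen
          (fun u v : Q => u ∈ f '' J ∧ v ∈ f '' J ∧ (u ≤ v ∨ v ≤ u)) (f a) y →
          ∃ b, f b = y ∧ Relation.ReflTransGen
            (fun u v : P => u ∈ J ∧ v ∈ J ∧ (u ≤ v ∨ v ≤ u)) a b := by
        intro y hy
        induction hy with
        | refl => exact ⟨a, rfl, .refl⟩
        | tail _ h2 ih =>
          obtain ⟨b, rfl, hb⟩ := ih
          obtain ⟨h1, ⟨c, hc, rfl⟩, h3⟩ := h2
          refine ⟨c, rfl, hb.tail ⟨(f.injective.mem_set_image).1 h1, hc, ?_⟩⟩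
          simpa using h3
      obtain ⟨b', hb', h⟩ := key _ (hc _ (Set.mem_image_of_mem f ha) _ (Set.mem_image_of_mem f hb))
      rwa [f.injective hb'] at h
    · rintro hc _ ⟨a, ha, rfl⟩ _ ⟨b, hb, rfl⟩
      refine Relation.ReflTransGen.lift f ?_ _ _ (hc a ha b hb)
      rintro u v ⟨hu, hv, h⟩
      exact ⟨⟨u, hu, rfl⟩, ⟨v, hv, rfl⟩, by simpa using h⟩

theorem aux_fst {m n : ℕ} {I : Set (Fin m × Fin n)} (hI : IsIntervalSet I) :
    (Prod.fst '' I).OrdConnected := by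
  obtain ⟨-, hc, hcon⟩ := hI
  refine ⟨?_⟩
  rintro _ ⟨x, hx, rfl⟩ _ ⟨y, hy, rfl⟩ k ⟨h1, h2⟩
  have h := hcon x hx y hy
  clear hy
  induction h with
  | refl => exact ⟨x, hx, le_antisymm h1 h2⟩
  | @tail b c _ hs ih =>
    obtain ⟨hb, hcI, hcmp⟩ := hs
    by_cases hk : k ≤ b.1
    · exact ih hk
    · push Not at hk
      rcases hcmp with h | h
      · exact ⟨(k, b.2), hc hb hcI ⟨hk.le, le_rfl⟩ ⟨h2, h.2⟩, rfl⟩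
      · exact absurd (h2.trans h.1) (not_le.2 hk)

theorem aux_snd {m n : ℕ} {I : Set (Fin m × Fin n)} (hI : IsIntervalSet I) :
    (Prod.snd '' I).OrdConnected := by
  obtain ⟨-, hc, hcon⟩ := hI
  refine ⟨?_⟩
  rintro _ ⟨x, hx, rfl⟩ _ ⟨y, hy, rfl⟩ k ⟨h1, h2⟩
  have h := hcon x hx y hy
  clear hy
  induction h with
  | refl => exact ⟨x, hx, le_antisymm h1 h2⟩
  | @tail b c _ hs ih =>
    obtain ⟨hb, hcI, hcmp⟩ := hs
    by_cases hk : k ≤ b.2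
    · exact ih hk
    · push Not at hk
      rcases hcmp with h | h
      · exact ⟨(b.1, k), hc hb hcI ⟨le_rfl, hk.le⟩ ⟨h.1, h2⟩, rfl⟩
      · exact absurd (h2.trans h.2) (not_le.2 hk)

theorem aux_seg {m h : ℕ} {T : Set (Fin m)} (hne : T.Nonempty) (hT : T.OrdConnected)
    (hc : T.ncard = h) : ∃ a : ℕ, a + h ≤ m ∧ ∀ i : Fin m, i ∈ T ↔ a ≤ i.1 ∧ i.1 < a + h := by
  obtain ⟨p, hp, hpmin⟩ := Set.exists_min_image T id T.toFinite hne
  obtain ⟨q, hq, hqmax⟩ := Set.exists_max_image T id T.toFinite hne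
  have hTe : T = Set.Icc p q :=
    Set.Subset.antisymm (fun x hx => ⟨hpmin x hx, hqmax x hx⟩) (hT.out hp hq)
  have hpq : p.1 ≤ q.1 := hpmin q hq
  have hcard : q.1 + 1 - p.1 = h := by
    rw [← hc, hTe, ← Finset.coe_Icc, Set.ncard_coe_finset, Fin.card_Icc]
  have := q.2
  refine ⟨p.1, by omega, fun i => ?_⟩
  rw [hTe, Set.mem_Icc, Fin.le_def, Fin.le_def]
  omega

def auxShift {m n h w : ℕ} (a b : ℕ) (ha : a + h ≤ m) (hb : b + w ≤ n) :
    Fin h × Fin w ↪o Fin m × Fin n where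
  toFun x := (⟨a + x.1.1, by omega⟩, ⟨b + x.2.1, by omega⟩)
  inj' := by
    rintro ⟨⟨x, _⟩, ⟨y, _⟩⟩ ⟨⟨x', _⟩, ⟨y', _⟩⟩ h
    simpa using h
  map_rel_iff' := by
    rintro ⟨⟨x, _⟩, ⟨y, _⟩⟩ ⟨⟨x', _⟩, ⟨y', _⟩⟩
    change (a + x ≤ a + x' ∧ b + y ≤ b + y') ↔ (x ≤ x' ∧ y ≤ y')
    simp

theorem auxShift_fst {m n h w : ℕ} (a b : ℕ) (ha : a + h ≤ m) (hb : b + w ≤ n)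
    (x : Fin h × Fin w) : (auxShift a b ha hb x).1.1 = a + x.1.1 := rfl

theorem auxShift_snd {m n h w : ℕ} (a b : ℕ) (ha : a + h ≤ m) (hb : b + w ≤ n)
    (x : Fin h × Fin w) : (auxShift a b ha hb x).2.1 = b + x.2.1 := rfl

theorem auxShift_range {m n h w : ℕ} (a b : ℕ) (ha : a + h ≤ m) (hb : b + w ≤ n)
    (x : Fin m × Fin n) : x ∈ Set.range (auxShift a b ha hb) ↔
      (a ≤ x.1.1 ∧ x.1.1 < a + h) ∧ (b ≤ x.2.1 ∧ x.2.1 < b + w) := by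
  constructor
  · rintro ⟨⟨i, j⟩, rfl⟩
    simp [auxShift_fst, auxShift_snd]
  · rintro ⟨⟨h1, h2⟩, ⟨h3, h4⟩⟩
    refine ⟨(⟨x.1.1 - a, by omega⟩, ⟨x.2.1 - b, by omega⟩), ?_⟩
    apply Prod.ext <;> apply Fin.ext <;> simp [auxShift_fst, auxShift_snd] <;> omega

theorem auxShift_convex {m n h w : ℕ} (a b : ℕ) (ha : a + h ≤ m) (hb : b + w ≤ n) :
    IsConvexSet (Set.range (auxShift a b ha hb)) := by
  intro x y z hx hz hxy hyz
  rw [auxShift_range] at *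
  have h1 : x.1.1 ≤ y.1.1 := hxy.1
  have h2 : x.2.1 ≤ y.2.1 := hxy.2
  have h3 : y.1.1 ≤ z.1.1 := hyz.1
  have h4 : y.2.1 ≤ z.2.1 := hyz.2
  omega

/-- The number of intervals of `Fin m × Fin n` of height `h` and
width `w` equals `(m-h+1)(n-w+1)` times the number of intervals of
`Fin h × Fin w` with both coordinate projections surjective. -/
theorem card_intervals_of_size (m n h w : ℕ) (hh : 1 ≤ h) (hhm : h ≤ m)
    (hw : 1 ≤ w) (hwn : w ≤ n) :
    {I : Set (Fin m × Fin n) | IsIntervalSet I ∧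
        (Prod.fst '' I).ncard = h ∧ (Prod.snd '' I).ncard = w}.ncard
      = (m - h + 1) * (n - w + 1) *
        {I : Set (Fin h × Fin w) | IsIntervalSet I ∧
          (∀ i : Fin h, ∃ j : Fin w, (i, j) ∈ I) ∧
          (∀ j : Fin w, ∃ i : Fin h, (i, j) ∈ I)}.ncard := by
  set S' := {I : Set (Fin h × Fin w) | IsIntervalSet I ∧
          (∀ i : Fin h, ∃ j : Fin w, (i, j) ∈ I) ∧
          (∀ j : Fin w, ∃ i : Fin h, (i, j) ∈ I)} with hS'
  let E : Fin (m - h + 1) × Fin (n - w + 1) → (Fin h × Fin w ↪o Fin m × Fin n) := fun p =>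
    auxShift p.1.1 p.2.1 (by omega) (by omega)
  let F : (Fin (m - h + 1) × Fin (n - w + 1)) × Set (Fin h × Fin w) → Set (Fin m × Fin n) :=
    fun p => E p.1 '' p.2
  have hinj : Set.InjOn F (Set.univ ×ˢ S') := by
    have half : ∀ p p' J J', J ∈ S' → E p '' J = E p' '' J' →
        p'.1.1 ≤ p.1.1 ∧ p'.2.1 ≤ p.2.1 := by
      intro p p' J J' hJ heq
      constructor
      · obtain ⟨j, hj⟩ := hJ.2.1 ⟨0, hh⟩
        obtain ⟨y, -, hy⟩ := heq ▸ Set.mem_image_of_mem (E p) hj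
        have := congrArg (fun z => z.1.1) hy
        simp [E, auxShift_fst, auxShift_snd] at this
        omega
      · obtain ⟨j, hj⟩ := hJ.2.2 ⟨0, hw⟩
        obtain ⟨y, -, hy⟩ := heq ▸ Set.mem_image_of_mem (E p) hj
        have := congrArg (fun z => z.2.1) hy
        simp [E, auxShift_fst, auxShift_snd] at this
        omega
    rintro ⟨p, J⟩ ⟨-, hJ⟩ ⟨p', J'⟩ ⟨-, hJ'⟩ heq
    have heq : E p '' J = E p' '' J' := heq
    have h1 := half _ _ _ _ hJ heq
    have h2 := half _ _ _ _ hJ' heq.symm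
    have hp : p = p' := by
      apply Prod.ext <;> apply Fin.ext <;> omega
    subst hp
    rw [(E p).injective.image_injective heq]
  have himg : {I : Set (Fin m × Fin n) | IsIntervalSet I ∧
        (Prod.fst '' I).ncard = h ∧ (Prod.snd '' I).ncard = w} = F '' (Set.univ ×ˢ S') := by
    ext I
    constructor
    · rintro ⟨hI, h1, h2⟩
      obtain ⟨a, ha, hA⟩ := aux_seg (hI.1.image _) (aux_fst hI) h1
      obtain ⟨b, hb, hB⟩ := aux_seg (hI.1.image _) (aux_snd hI) h2
      let f := auxShift a b ha hb
      have hr : I ⊆ Set.range f := fun x hx =>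
        (auxShift_range a b ha hb x).2 ⟨(hA _).1 ⟨x, hx, rfl⟩, (hB _).1 ⟨x, hx, rfl⟩⟩
      have hfI : f '' (f ⁻¹' I) = I := Set.image_preimage_eq_of_subset hr
      refine ⟨((⟨a, by omega⟩, ⟨b, by omega⟩), f ⁻¹' I), ⟨trivial, ?_, ?_, ?_⟩, hfI⟩
      · rw [← aux_image f (auxShift_convex a b ha hb)]
        simpa only [hfI] using hI
      · intro i
        obtain ⟨x, hx, hxi⟩ := (hA ⟨a + i.1, by omega⟩).2 ⟨by simp, by simp⟩
        obtain ⟨⟨i', j⟩, rfl⟩ := hr hx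
        have : i' = i := by
          apply Fin.ext
          simpa [f, auxShift_fst, auxShift_snd] using congrArg Fin.val hxi
        subst this
        exact ⟨j, hx⟩
      · intro i
        obtain ⟨x, hx, hxi⟩ := (hB ⟨b + i.1, by omega⟩).2 ⟨by simp, by simp⟩
        obtain ⟨⟨j, i'⟩, rfl⟩ := hr hx
        have : i' = i := by
          apply Fin.ext
          simpa [f, auxShift_fst, auxShift_snd] using congrArg Fin.val hxi
        subst this
        exact ⟨j, hx⟩
    · rintro ⟨⟨p, J⟩, ⟨-, hJ, hJ1, hJ2⟩, rfl⟩
      refine ⟨(aux_image (E p) (auxShift_convex _ _ _ _) J).2 hJ, ?_, ?_⟩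
      · have : Prod.fst '' F (p, J) =
            (fun i : Fin h => (⟨p.1.1 + i.1, by omega⟩ : Fin m)) '' Set.univ := by
          ext x
          constructor
          · rintro ⟨_, ⟨y, hy, rfl⟩, rfl⟩
            exact ⟨y.1, trivial, rfl⟩
          · rintro ⟨i, -, rfl⟩
            obtain ⟨j, hj⟩ := hJ1 i
            exact ⟨_, ⟨_, hj, rfl⟩, rfl⟩
        rw [this, Set.ncard_image_of_injective, Set.ncard_univ, Nat.card_fin]
        intro i j hij
        apply Fin.ext
        simpa using hij
      · have : Prod.snd '' F (p, J) =
            (fun i : Fin w => (⟨p.2.1 + i.1, by omega⟩ : Fin n)) '' Set.univ := by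
          ext x
          constructor
          · rintro ⟨_, ⟨y, hy, rfl⟩, rfl⟩
            exact ⟨y.2, trivial, rfl⟩
          · rintro ⟨i, -, rfl⟩
            obtain ⟨j, hj⟩ := hJ2 i
            exact ⟨_, ⟨_, hj, rfl⟩, rfl⟩
        rw [this, Set.ncard_image_of_injective, Set.ncard_univ, Nat.card_fin]
        intro i j hij
        apply Fin.ext
        simpa using hij
  rw [himg, hinj.ncard_image, Set.ncard_prod, Set.ncard_univ, Nat.card_prod,
    Nat.card_fin, Nat.card_fin]
end
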